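/- arXiv:0906.1632 — 3 statements merged into one kernel-verified Lean document; each statement's English description precedes it below -/
import Mathlib

section
/- Suppose 𝓕_0 is P-trivial and that for each i = 1,2,… and s = 0,…,T the function u_{i,s} is C^2 with u_{i,s}'' nondecreasing, and the divergence condition Σ_{i=1}^∞ ∫_0^δ (δ−λ)/u_{i,s}''(I_{i,s}(1+λ)) dλ = −∞ holds for every δ > 0 and every s, where I_{i,s} is the inverse of u_{i,s}'. Then for every Z ∈ L^∞_T, lim_{n→∞} H_{n,0}(Z) = E[Z]. -/
open MeasureTheory Filter

variable {Ω : Type*}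

/-- `X ∈ L^∞(m)`: `m`-measurable and (essentially) bounded. -/
def MeasBdd (m : MeasurableSpace Ω) (X : Ω → ℝ) : Prop :=
  Measurable[m] X ∧ ∃ C : ℝ, ∀ ω, |X ω| ≤ C

/-- `u` is a utility function (strictly increasing, strictly concave, `C¹`) with
derivative `u'` satisfying `u 0 = 0`, `u' 0 = 1`, `u'(+∞) = 0`, `u'(-∞) = +∞`. -/
structure IsUtility (u u' : ℝ → ℝ) : Prop where
  strictMono : StrictMono u
  strictConcave : StrictConcaveOn ℝ Set.univ u
  hasDeriv : ∀ x, HasDerivAt u (u' x) x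
  derivCont : Continuous u'
  zero : u 0 = 0
  deriv_zero : u' 0 = 1
  deriv_top : Tendsto u' atTop (nhds 0)
  deriv_bot : Tendsto u' atBot atTop

/-- A diversification of `Z` at time `t`: an adapted family `(X i s)`,
`i = 1,…,n`, `s = t,…,T`, of essentially bounded random variables summing to `Z`. -/
def IsDiv {m0 : MeasurableSpace Ω} (P : Measure Ω) (ℱ : Filtration ℕ m0)
    (n t T : ℕ) (Z : Ω → ℝ) (X : ℕ → ℕ → Ω → ℝ) : Prop :=
  (∀ i ∈ Finset.Icc 1 n, ∀ s ∈ Finset.Icc t T, MeasBdd (ℱ s) (X i s)) ∧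
  ∀ᵐ ω ∂P, (∑ i ∈ Finset.Icc 1 n, ∑ s ∈ Finset.Icc t T, X i s ω) = Z ω

/-- The total conditional expected utility `∑_{i,s} E[u_{i,s}(X_{i,s}) | 𝓕_t]`. -/
noncomputable def utilSum {m0 : MeasurableSpace Ω} (P : Measure Ω) (ℱ : Filtration ℕ m0)
    (u : ℕ → ℕ → ℝ → ℝ) (n t T : ℕ) (X : ℕ → ℕ → Ω → ℝ) : Ω → ℝ :=
  fun ω => ∑ i ∈ Finset.Icc 1 n, ∑ s ∈ Finset.Icc t T,
    (P[fun ω' => u i s (X i s ω') | ℱ t]) ω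

/-- The time-0 utility `U_{n,0}(Z)` (with `𝓕_0` trivial, a real number):
`sup { Σ_{(i,s)} E[u_{i,s}(X_{i,s})] : (X_{i,s}) ∈ 𝓐_{n,0}(Z) }`. -/
noncomputable def U0 {m0 : MeasurableSpace Ω} (P : Measure Ω) (ℱ : Filtration ℕ m0)
    (u : ℕ → ℕ → ℝ → ℝ) (n T : ℕ) (Z : Ω → ℝ) : ℝ :=
  sSup {r | ∃ X : ℕ → ℕ → Ω → ℝ, IsDiv P ℱ n 0 T Z X ∧
    r = ∑ i ∈ Finset.Icc 1 n, ∑ s ∈ Finset.Icc 0 T, ∫ ω, u i s (X i s ω) ∂P}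

/-- The time-0 indifference premium `H_{n,0}(Z) = inf { K ∈ ℝ : U_{n,0}(K − Z) ≥ 0 }`. -/
noncomputable def H0 {m0 : MeasurableSpace Ω} (P : Measure Ω) (ℱ : Filtration ℕ m0)
    (u : ℕ → ℕ → ℝ → ℝ) (n T : ℕ) (Z : Ω → ℝ) : ℝ :=
  sInf {K : ℝ | 0 ≤ U0 P ℱ u n T fun ω => K - Z ω}

/-!
Concavity gives `u' x * x ≤ u x ≤ x` for a normalised utility `u`. The right-hand inequality bounds
the utility of every diversification of `K - Z` by `K - E[Z]`, so no premium below `E[Z]` is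
admissible. Conversely, let `I` be the inverse of `u'`. Convexity of `u'` gives `|u' x - 1| ≤ δ`
whenever `|x| ≤ -I (1 + δ)`, so an agent whose share is at most `-I (1 + δ)` in absolute value is
risk neutral up to the factor `δ`. The divergence condition forces `∑ i, -I i (1 + δ) = ∞`;
splitting `E[Z] + ε - Z` at the last date in proportion to these numbers therefore gives every agent
a nonnegative expected utility once enough agents take part.
-/

section Calculus

theorem concaveOn_le_add_mul_sub_of_hasDerivAt {S : Set ℝ} {f : ℝ → ℝ} {f' x y : ℝ}
    (hf : ConcaveOn ℝ S f) (hx : x ∈ S) (hy : y ∈ S) (hf' : HasDerivAt f f' x) :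
    f y ≤ f x + f' * (y - x) := by
  rcases lt_trichotomy x y with hxy | rfl | hyx
  · have h := hf.slope_le_of_hasDerivAt hx hy hxy hf'
    rw [slope_def_field, div_le_iff₀ (sub_pos.2 hxy)] at h
    linarith
  · simp
  · have h := hf.le_slope_of_hasDerivAt hy hx hyx hf'
    rw [slope_def_field, le_div_iff₀ (sub_pos.2 hyx)] at h
    linarith

theorem neg_of_strictAnti_of_monotone_hasDerivAt {f f' : ℝ → ℝ} (hf : StrictAnti f)
    (hderiv : ∀ x, HasDerivAt f (f' x) x) (hf' : Monotone f') (x : ℝ) : f' x < 0 := by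
  have hlt : x < x + 1 := lt_add_one x
  obtain ⟨c, hc, hslope⟩ := exists_hasDerivAt_eq_slope f f' hlt
    (fun y _ => (hderiv y).continuousAt.continuousWithinAt) fun y _ => hderiv y
  calc f' x ≤ f' c := hf' hc.1.le
    _ = (f (x + 1) - f x) / (x + 1 - x) := hslope
    _ < 0 := div_neg_of_neg_of_pos (sub_neg.2 (hf hlt)) (sub_pos.2 hlt)

theorem convexOn_univ_of_monotone_hasDerivAt {f f' : ℝ → ℝ}
    (hderiv : ∀ x, HasDerivAt f (f' x) x) (hf' : Monotone f') : ConvexOn ℝ Set.univ f := by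
  refine Monotone.convexOn_univ_of_deriv (fun x => (hderiv x).differentiableAt) ?_
  rwa [funext fun x => (hderiv x).deriv]

end Calculus

namespace IsUtility

section FirstOrder

variable {u u' I : ℝ → ℝ}

theorem continuous (hu : IsUtility u u') : Continuous u :=
  continuous_iff_continuousAt.2 fun x => (hu.hasDeriv x).continuousAt

theorem strictAnti_deriv (hu : IsUtility u u') : StrictAnti u' := by
  have h := hu.strictConcave.strictAntiOn_deriv fun x _ => (hu.hasDeriv x).differentiableAt
  rwa [funext fun x => (hu.hasDeriv x).deriv, strictAntiOn_univ] at h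

theorem le_add_deriv_mul_sub (hu : IsUtility u u') (x y : ℝ) : u y ≤ u x + u' x * (y - x) :=
  concaveOn_le_add_mul_sub_of_hasDerivAt hu.strictConcave.concaveOn (Set.mem_univ x)
    (Set.mem_univ y) (hu.hasDeriv x)

theorem le_self (hu : IsUtility u u') (x : ℝ) : u x ≤ x := by
  simpa [hu.zero, hu.deriv_zero] using hu.le_add_deriv_mul_sub 0 x

theorem deriv_mul_self_le (hu : IsUtility u u') (x : ℝ) : u' x * x ≤ u x := by
  have h := hu.le_add_deriv_mul_sub x 0
  rw [hu.zero] at h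
  linarith

theorem abs_deriv_sub_one_le (hu : IsUtility u u') (hconv : ConvexOn ℝ Set.univ u') {a δ x : ℝ}
    (ha : u' a = 1 + δ) (hx : |x| ≤ -a) : |u' x - 1| ≤ δ := by
  obtain ⟨hax, hxa⟩ := abs_le.1 hx
  rw [neg_neg] at hax
  have hupper : u' x ≤ 1 + δ := ha ▸ hu.strictAnti_deriv.antitone hax
  have hmidpoint : 1 ≤ (u' a + u' (-a)) / 2 := by
    have h := hconv.2 (Set.mem_univ a) (Set.mem_univ (-a)) (by norm_num : (0 : ℝ) ≤ 1 / 2)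
      (by norm_num : (0 : ℝ) ≤ 1 / 2) (by norm_num)
    simp only [smul_eq_mul, mul_neg, add_neg_cancel, hu.deriv_zero] at h
    linarith
  have hlower : u' (-a) ≤ u' x := hu.strictAnti_deriv.antitone hxa
  rw [abs_le]
  constructor <;> linarith

theorem sub_mul_abs_le (hu : IsUtility u u') (hconv : ConvexOn ℝ Set.univ u') {a δ x : ℝ}
    (ha : u' a = 1 + δ) (hx : |x| ≤ -a) : x - δ * |x| ≤ u x :=
  calc x - δ * |x| ≤ x - |u' x - 1| * |x| := by
        gcongr
        exact hu.abs_deriv_sub_one_le hconv ha hx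
    _ = x - |(u' x - 1) * x| := by rw [abs_mul]
    _ ≤ x + (u' x - 1) * x := by linarith [neg_abs_le ((u' x - 1) * x)]
    _ = u' x * x := by ring
    _ ≤ u x := hu.deriv_mul_self_le x

theorem deriv_leftInverse_apply (hu : IsUtility u u') (hI : Function.LeftInverse I u') {y : ℝ}
    (hy : 0 < y) : u' (I y) = y := by
  obtain ⟨x, rfl⟩ : y ∈ Set.range u' :=
    mem_range_of_exists_le_of_exists_ge hu.derivCont
      (hu.deriv_top.eventually_le_const hy).exists (hu.deriv_bot.eventually_ge_atTop y).exists
  rw [hI x]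

theorem leftInverse_one (hu : IsUtility u u') (hI : Function.LeftInverse I u') : I 1 = 0 := by
  rw [← hu.deriv_zero, hI 0]

theorem leftInverse_nonpos (hu : IsUtility u u') (hI : Function.LeftInverse I u') {y : ℝ}
    (hy : 1 ≤ y) : I y ≤ 0 := by
  rwa [← hu.strictAnti_deriv.le_iff_ge, hu.deriv_zero, hu.deriv_leftInverse_apply hI (by linarith)]

end FirstOrder

section SecondOrder

variable {u u' u'' I : ℝ → ℝ}

theorem deriv2_neg (hu : IsUtility u u') (hu' : ∀ x, HasDerivAt u' (u'' x) x)
    (hmono : Monotone u'') (x : ℝ) : u'' x < 0 :=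
  neg_of_strictAnti_of_monotone_hasDerivAt hu.strictAnti_deriv hu' hmono x

theorem hasDerivAt_leftInverse (hu : IsUtility u u') (hu' : ∀ x, HasDerivAt u' (u'' x) x)
    (hcont : Continuous u'') (hmono : Monotone u'') (hI : Function.LeftInverse I u') {y : ℝ}
    (hy : 0 < y) : HasDerivAt I (u'' (I y))⁻¹ y := by
  have hstrict : HasStrictDerivAt u' (u'' (I y)) (I y) :=
    hasStrictDerivAt_of_hasDerivAt_of_continuousAt (Eventually.of_forall hu') hcont.continuousAt
  have h := hstrict.to_local_left_inverse (hu.deriv2_neg hu' hmono _).ne (Eventually.of_forall hI)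
  rw [hu.deriv_leftInverse_apply hI hy] at h
  exact h.hasDerivAt

theorem continuousOn_inv_deriv2_leftInverse (hu : IsUtility u u')
    (hu' : ∀ x, HasDerivAt u' (u'' x) x) (hcont : Continuous u'') (hmono : Monotone u'')
    (hI : Function.LeftInverse I u') : ContinuousOn (fun y => (u'' (I y))⁻¹) (Set.Ioi 0) := by
  have hIcont : ContinuousOn I (Set.Ioi 0) := fun y hy =>
    (hu.hasDerivAt_leftInverse hu' hcont hmono hI hy).continuousAt.continuousWithinAt
  exact (hcont.comp_continuousOn hIcont).inv₀ fun y _ => (hu.deriv2_neg hu' hmono _).ne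

theorem mul_leftInverse_le_integral (hu : IsUtility u u') (hu' : ∀ x, HasDerivAt u' (u'' x) x)
    (hcont : Continuous u'') (hmono : Monotone u'') (hI : Function.LeftInverse I u') {δ : ℝ}
    (hδ : 0 ≤ δ) : δ * I (1 + δ) ≤ ∫ l in (0 : ℝ)..δ, (δ - l) / u'' (I (1 + l)) := by
  have hpos : ∀ l ∈ Set.uIcc 0 δ, 0 < 1 + l := fun l hl => by
    rw [Set.uIcc_of_le hδ] at hl
    linarith [hl.1]
  have hinv : ContinuousOn (fun l => (u'' (I (1 + l)))⁻¹) (Set.uIcc 0 δ) :=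
    (hu.continuousOn_inv_deriv2_leftInverse hu' hcont hmono hI).comp (by fun_prop) hpos
  have hftc : ∫ l in (0 : ℝ)..δ, (u'' (I (1 + l)))⁻¹ = I (1 + δ) := by
    rw [intervalIntegral.integral_eq_sub_of_hasDerivAt (f := fun l => I (1 + l))
      (fun l hl => (hu.hasDerivAt_leftInverse hu' hcont hmono hI (hpos l hl)).comp_const_add 1 l)
      hinv.intervalIntegrable, add_zero, hu.leftInverse_one hI, sub_zero]
  rw [← hftc, ← intervalIntegral.integral_const_mul]
  simp only [div_eq_mul_inv]
  refine intervalIntegral.integral_mono_on hδ (continuousOn_const.mul hinv).intervalIntegrable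
    ((by fun_prop : ContinuousOn (fun l => δ - l) _).mul hinv).intervalIntegrable fun l hl => ?_
  exact mul_le_mul_of_nonpos_right (sub_le_self δ hl.1)
    (inv_nonpos.2 (hu.deriv2_neg hu' hmono _).le)

end SecondOrder

end IsUtility

theorem tendsto_sum_leftInverse_atBot {u u' u'' I : ℕ → ℝ → ℝ}
    (hu : ∀ i, IsUtility (u i) (u' i)) (hu' : ∀ i x, HasDerivAt (u' i) (u'' i x) x)
    (hcont : ∀ i, Continuous (u'' i)) (hmono : ∀ i, Monotone (u'' i))
    (hI : ∀ i, Function.LeftInverse (I i) (u' i)) {δ : ℝ} (hδ : 0 < δ)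
    (hdiv : Tendsto (fun n => ∑ i ∈ Finset.Icc 1 n,
      ∫ l in (0 : ℝ)..δ, (δ - l) / u'' i (I i (1 + l))) atTop atBot) :
    Tendsto (fun n => ∑ i ∈ Finset.Icc 1 n, I i (1 + δ)) atTop atBot := by
  rw [← tendsto_const_mul_atBot_of_pos hδ]
  refine tendsto_atBot_mono (fun n => ?_) hdiv
  rw [Finset.mul_sum]
  exact Finset.sum_le_sum fun i _ =>
    (hu i).mul_leftInverse_le_integral (hu' i) (hcont i) (hmono i) (hI i) hδ.le

namespace MeasBdd

variable {m : MeasurableSpace Ω} {X : Ω → ℝ}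

theorem const_mul (hX : MeasBdd m X) (c : ℝ) : MeasBdd m fun ω => c * X ω := by
  obtain ⟨hmeas, C, hC⟩ := hX
  refine ⟨hmeas.const_mul c, |c| * C, fun ω => ?_⟩
  rw [abs_mul]
  exact mul_le_mul_of_nonneg_left (hC ω) (abs_nonneg c)

theorem const_sub (hX : MeasBdd m X) (c : ℝ) : MeasBdd m fun ω => c - X ω := by
  obtain ⟨hmeas, C, hC⟩ := hX
  exact ⟨hmeas.const_sub c, |c| + C, fun ω =>
    (abs_sub c (X ω)).trans (add_le_add_right (hC ω) |c|)⟩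

theorem integrable_comp {m0 : MeasurableSpace Ω} {P : Measure Ω} [IsFiniteMeasure P]
    (hX : MeasBdd m X) (hm : m ≤ m0) {f : ℝ → ℝ} (hf : Continuous f) :
    Integrable (fun ω => f (X ω)) P := by
  obtain ⟨hmeas, C, hC⟩ := hX
  obtain ⟨B, hB⟩ :=
    (isCompact_Icc (a := -C) (b := C)).exists_bound_of_continuousOn hf.continuousOn
  exact Integrable.of_bound (hf.measurable.comp (hmeas.mono hm le_rfl)).aestronglyMeasurable B
    (Eventually.of_forall fun ω => hB _ (abs_le.1 (hC ω)))

theorem integrable {m0 : MeasurableSpace Ω} {P : Measure Ω} [IsFiniteMeasure P]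
    (hX : MeasBdd m X) (hm : m ≤ m0) : Integrable X P :=
  hX.integrable_comp hm continuous_id

theorem integral_const_sub {m0 : MeasurableSpace Ω} {P : Measure Ω} [IsProbabilityMeasure P]
    (hX : MeasBdd m X) (hm : m ≤ m0) (c : ℝ) : ∫ ω, (c - X ω) ∂P = c - ∫ ω, X ω ∂P := by
  simp [integral_sub (integrable_const c) (hX.integrable hm)]

end MeasBdd

/-- The allocation paying agent `i` the share `w i` of `Y` at the last date `T` and nothing before;
it is a diversification of `Y` when the shares add up to `1`. -/
def terminalAllocation (T : ℕ) (w : ℕ → ℝ) (Y : Ω → ℝ) (i s : ℕ) (ω : Ω) : ℝ :=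
  if s = T then w i * Y ω else 0

section Diversification

variable {m0 : MeasurableSpace Ω} {P : Measure Ω} {ℱ : Filtration ℕ m0} {u u' : ℕ → ℕ → ℝ → ℝ}
  {n t T : ℕ} {Y Z : Ω → ℝ}

theorem isDiv_terminalAllocation {w : ℕ → ℝ} (hw : ∑ i ∈ Finset.Icc 1 n, w i = 1) (htT : t ≤ T)
    (hY : MeasBdd (ℱ T) Y) : IsDiv P ℱ n t T Y (terminalAllocation T w Y) := by
  refine ⟨fun i _ s _ => ?_, Eventually.of_forall fun ω => ?_⟩
  · unfold terminalAllocation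
    split_ifs with hs
    · exact hs ▸ hY.const_mul (w i)
    · exact ⟨measurable_const, 0, fun ω => abs_zero.le⟩
  · simp [terminalAllocation, htT, ← Finset.sum_mul, hw]

theorem sum_integral_terminalAllocation (hu : ∀ i s, u i s 0 = 0) (htT : t ≤ T) (w : ℕ → ℝ) :
    ∑ i ∈ Finset.Icc 1 n, ∑ s ∈ Finset.Icc t T, ∫ ω, u i s (terminalAllocation T w Y i s ω) ∂P =
      ∑ i ∈ Finset.Icc 1 n, ∫ ω, u i T (w i * Y ω) ∂P := by
  refine Finset.sum_congr rfl fun i _ => ?_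
  rw [Finset.sum_eq_single_of_mem T (Finset.right_mem_Icc.2 htT)]
  · simp [terminalAllocation]
  · intro s _ hs
    simp [terminalAllocation, hs, hu]

theorem IsDiv.sum_integral_le [IsFiniteMeasure P] {X : ℕ → ℕ → Ω → ℝ}
    (hX : IsDiv P ℱ n t T Y X) (hu : ∀ i s, IsUtility (u i s) (u' i s)) :
    ∑ i ∈ Finset.Icc 1 n, ∑ s ∈ Finset.Icc t T, ∫ ω, u i s (X i s ω) ∂P ≤ ∫ ω, Y ω ∂P := by
  obtain ⟨hbdd, hsum⟩ := hX
  have hint : ∀ i ∈ Finset.Icc 1 n, ∀ s ∈ Finset.Icc t T, Integrable (X i s) P :=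
    fun i hi s hs => (hbdd i hi s hs).integrable (ℱ.le s)
  calc ∑ i ∈ Finset.Icc 1 n, ∑ s ∈ Finset.Icc t T, ∫ ω, u i s (X i s ω) ∂P
      ≤ ∑ i ∈ Finset.Icc 1 n, ∑ s ∈ Finset.Icc t T, ∫ ω, X i s ω ∂P :=
        Finset.sum_le_sum fun i hi => Finset.sum_le_sum fun s hs =>
          integral_mono ((hbdd i hi s hs).integrable_comp (ℱ.le s) (hu i s).continuous)
            (hint i hi s hs) fun ω => (hu i s).le_self _
    _ = ∑ i ∈ Finset.Icc 1 n, ∫ ω, ∑ s ∈ Finset.Icc t T, X i s ω ∂P :=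
        Finset.sum_congr rfl fun i hi => (integral_finsetSum _ (hint i hi)).symm
    _ = ∫ ω, ∑ i ∈ Finset.Icc 1 n, ∑ s ∈ Finset.Icc t T, X i s ω ∂P :=
        (integral_finsetSum _ fun i hi => integrable_finsetSum _ (hint i hi)).symm
    _ = ∫ ω, Y ω ∂P := integral_congr_ae hsum

theorem IsDiv.sum_integral_le_U0 [IsFiniteMeasure P] {X : ℕ → ℕ → Ω → ℝ}
    (hX : IsDiv P ℱ n 0 T Y X) (hu : ∀ i s, IsUtility (u i s) (u' i s)) :
    ∑ i ∈ Finset.Icc 1 n, ∑ s ∈ Finset.Icc 0 T, ∫ ω, u i s (X i s ω) ∂P ≤ U0 P ℱ u n T Y := by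
  refine le_csSup ⟨∫ ω, Y ω ∂P, ?_⟩ ⟨X, hX, rfl⟩
  rintro r ⟨X', hX', rfl⟩
  exact hX'.sum_integral_le hu

-- For `n = 0` there is in general no diversification, and `U0` is the junk value `sSup ∅ = 0`.
theorem U0_le_integral [IsFiniteMeasure P] (hu : ∀ i s, IsUtility (u i s) (u' i s)) (hn : 1 ≤ n)
    (hY : MeasBdd (ℱ T) Y) : U0 P ℱ u n T Y ≤ ∫ ω, Y ω ∂P := by
  have hw : ∑ i ∈ Finset.Icc 1 n, (Pi.single 1 1 : ℕ → ℝ) i = 1 := by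
    simp [Finset.sum_pi_single', hn]
  refine csSup_le ⟨_, _, isDiv_terminalAllocation hw T.zero_le hY, rfl⟩ ?_
  rintro r ⟨X, hX, rfl⟩
  exact hX.sum_integral_le hu

theorem H0_mem_Icc [IsProbabilityMeasure P] (hu : ∀ i s, IsUtility (u i s) (u' i s)) (hn : 1 ≤ n)
    (hZ : MeasBdd (ℱ T) Z) {K : ℝ} (hK : 0 ≤ U0 P ℱ u n T fun ω => K - Z ω) :
    H0 P ℱ u n T Z ∈ Set.Icc (∫ ω, Z ω ∂P) K := by
  have hlower : ∫ ω, Z ω ∂P ∈ lowerBounds {K : ℝ | 0 ≤ U0 P ℱ u n T fun ω => K - Z ω} := by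
    intro K' hK'
    have h := hK'.out.trans (U0_le_integral hu hn (hZ.const_sub K'))
    rwa [hZ.integral_const_sub (ℱ.le T), sub_nonneg] at h
  exact ⟨le_csInf ⟨K, hK⟩ hlower, csInf_le ⟨_, hlower⟩ hK⟩

end Diversification

section RiskSharing

variable {m0 : MeasurableSpace Ω} {P : Measure Ω} [IsProbabilityMeasure P]

theorem integral_utility_mul_nonneg {m : MeasurableSpace Ω} (hm : m ≤ m0) {Y : Ω → ℝ}
    (hY : MeasBdd m Y) {C : ℝ} (hC : ∀ ω, |Y ω| ≤ C) {v : ℝ → ℝ} (hv : Continuous v) {b δ : ℝ}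
    (hδ : 0 ≤ δ) (hlower : ∀ x, |x| ≤ b → x - δ * |x| ≤ v x) (hmean : δ * C ≤ ∫ ω, Y ω ∂P)
    {w : ℝ} (hw : 0 ≤ w) (hwb : w * C ≤ b) : 0 ≤ ∫ ω, v (w * Y ω) ∂P := by
  have hYint : Integrable Y P := hY.integrable hm
  have hpointwise : ∀ ω, w * (Y ω - δ * C) ≤ v (w * Y ω) := fun ω => by
    have habs : |w * Y ω| ≤ w * C := by
      rw [abs_mul, abs_of_nonneg hw]
      exact mul_le_mul_of_nonneg_left (hC ω) hw
    calc w * (Y ω - δ * C) = w * Y ω - δ * (w * C) := by ring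
      _ ≤ w * Y ω - δ * |w * Y ω| := by gcongr
      _ ≤ v (w * Y ω) := hlower _ (habs.trans hwb)
  calc (0 : ℝ) ≤ w * (∫ ω, Y ω ∂P - δ * C) := mul_nonneg hw (sub_nonneg.2 hmean)
    _ = ∫ ω, w * (Y ω - δ * C) ∂P := by
        simp [integral_const_mul, integral_sub hYint (integrable_const (δ * C))]
    _ ≤ ∫ ω, v (w * Y ω) ∂P :=
        integral_mono ((hYint.sub (integrable_const _)).const_mul w)
          ((hY.const_mul w).integrable_comp hm hv) hpointwise

variable {ℱ : Filtration ℕ m0} {T : ℕ} {u u' : ℕ → ℕ → ℝ → ℝ} {Y : Ω → ℝ}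

theorem U0_nonneg_of_le_sum (hu : ∀ i s, IsUtility (u i s) (u' i s)) {n : ℕ}
    (hY : MeasBdd (ℱ T) Y) {C : ℝ} (hC : ∀ ω, |Y ω| ≤ C) (hCpos : 0 < C) {b : ℕ → ℝ} {δ : ℝ}
    (hδ : 0 ≤ δ) (hb : ∀ i, 0 ≤ b i) (hlower : ∀ i x, |x| ≤ b i → x - δ * |x| ≤ u i T x)
    (hmean : δ * C ≤ ∫ ω, Y ω ∂P) (hsum : C ≤ ∑ i ∈ Finset.Icc 1 n, b i) :
    0 ≤ U0 P ℱ u n T Y := by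
  set S := ∑ i ∈ Finset.Icc 1 n, b i
  have hSpos : 0 < S := hCpos.trans_le hsum
  have hw : ∑ i ∈ Finset.Icc 1 n, b i / S = 1 := by
    rw [← Finset.sum_div, div_self hSpos.ne']
  have hshare : ∀ i, b i / S * C ≤ b i := fun i => by
    rw [div_mul_eq_mul_div, div_le_iff₀ hSpos]
    exact mul_le_mul_of_nonneg_left hsum (hb i)
  calc (0 : ℝ) ≤ ∑ i ∈ Finset.Icc 1 n, ∫ ω, u i T (b i / S * Y ω) ∂P :=
        Finset.sum_nonneg fun i _ => integral_utility_mul_nonneg (ℱ.le T) hY hC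
          (hu i T).continuous hδ (hlower i) hmean (div_nonneg (hb i) hSpos.le) (hshare i)
    _ = ∑ i ∈ Finset.Icc 1 n, ∑ s ∈ Finset.Icc 0 T,
          ∫ ω, u i s (terminalAllocation T (fun i => b i / S) Y i s ω) ∂P :=
        (sum_integral_terminalAllocation (fun i s => (hu i s).zero) T.zero_le _).symm
    _ ≤ U0 P ℱ u n T Y :=
        (isDiv_terminalAllocation hw T.zero_le hY).sum_integral_le_U0 hu

theorem eventually_U0_nonneg (hu : ∀ i s, IsUtility (u i s) (u' i s))
    (hconv : ∀ i, ConvexOn ℝ Set.univ (u' i T)) {I : ℕ → ℝ → ℝ}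
    (hI : ∀ i, Function.LeftInverse (I i) (u' i T))
    (hdiv : ∀ δ : ℝ, 0 < δ → Tendsto (fun n => ∑ i ∈ Finset.Icc 1 n, I i (1 + δ)) atTop atBot)
    (hY : MeasBdd (ℱ T) Y) (hmean : 0 < ∫ ω, Y ω ∂P) :
    ∀ᶠ n in atTop, 0 ≤ U0 P ℱ u n T Y := by
  obtain ⟨C, hC⟩ := hY.2
  have hmeanC : ∫ ω, Y ω ∂P ≤ C := by
    have h := norm_integral_le_of_norm_le_const (f := Y) (μ := P) (Eventually.of_forall hC)
    rw [probReal_univ, mul_one] at h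
    exact (le_abs_self _).trans h
  have hCpos : 0 < C := hmean.trans_le hmeanC
  obtain ⟨δ, hδ, hδC⟩ : ∃ δ : ℝ, 0 < δ ∧ δ * C = ∫ ω, Y ω ∂P :=
    ⟨_, div_pos hmean hCpos, div_mul_cancel₀ _ hCpos.ne'⟩
  filter_upwards [(hdiv δ hδ).eventually_le_atBot (-C)] with n hn
  refine U0_nonneg_of_le_sum hu hY hC hCpos hδ.le (b := fun i => -I i (1 + δ))
    (fun i => neg_nonneg.2 ((hu i T).leftInverse_nonpos (hI i) (by linarith)))
    (fun i x hx => (hu i T).sub_mul_abs_le (hconv i)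
      ((hu i T).deriv_leftInverse_apply (hI i) (by linarith)) hx) hδC.le ?_
  rw [Finset.sum_neg_distrib]
  exact le_neg_of_le_neg hn

end RiskSharing

theorem premium_tendsto_expectation_of_many_products_general
    {m0 : MeasurableSpace Ω} {P : Measure Ω} [IsProbabilityMeasure P]
    {ℱ : Filtration ℕ m0} {T : ℕ} {u u' : ℕ → ℕ → ℝ → ℝ}
    (hu : ∀ i s, IsUtility (u i s) (u' i s)) (hconv : ∀ i, ConvexOn ℝ Set.univ (u' i T))
    {I : ℕ → ℝ → ℝ} (hI : ∀ i, Function.LeftInverse (I i) (u' i T))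
    (hdiv : ∀ δ : ℝ, 0 < δ → Tendsto (fun n => ∑ i ∈ Finset.Icc 1 n, I i (1 + δ)) atTop atBot)
    {Z : Ω → ℝ} (hZ : MeasBdd (ℱ T) Z) :
    Tendsto (fun n => H0 P ℱ u n T Z) atTop (nhds (∫ ω, Z ω ∂P)) := by
  refine (nhds_basis_Icc_pos _).tendsto_right_iff.2 fun ε hε => ?_
  have hmean : 0 < ∫ ω, (∫ ω, Z ω ∂P + ε - Z ω) ∂P := by
    rwa [hZ.integral_const_sub (ℱ.le T), add_sub_cancel_left]
  filter_upwards [eventually_U0_nonneg hu hconv hI hdiv (hZ.const_sub _) hmean,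
    eventually_ge_atTop 1] with n hadmissible hn
  exact Set.Icc_subset_Icc_left (sub_le_self _ hε.le) (H0_mem_Icc hu hn hZ hadmissible)

/-- Theorem 3.3: under the divergence condition on the second
derivatives, the indifference premium converges to the expectation:
`H_{n,0}(Z) → E[Z]` as `n → ∞`. -/
theorem premium_tendsto_expectation_of_many_products
    {m0 : MeasurableSpace Ω} (P : Measure Ω) [IsProbabilityMeasure P]
    (ℱ : Filtration ℕ m0) (T : ℕ) (hT : 0 < T)
    -- `𝓕_0` is `P`-trivial:
    (hF0 : ∀ A : Set Ω, MeasurableSet[ℱ 0] A → P A = 0 ∨ P A = 1)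
    (u u' u'' : ℕ → ℕ → ℝ → ℝ)
    (hu : ∀ i s, IsUtility (u i s) (u' i s))
    -- `C²` with nondecreasing second derivative:
    (hu'' : ∀ i s, (∀ x, HasDerivAt (u' i s) (u'' i s x) x) ∧
      Continuous (u'' i s) ∧ Monotone (u'' i s))
    -- `I i s` is the inverse function of `u' i s`:
    (I : ℕ → ℕ → ℝ → ℝ) (hI : ∀ i s, ∀ x : ℝ, I i s (u' i s x) = x)
    -- the divergence condition (3.1):
    (hdiv : ∀ s, s ≤ T → ∀ δ : ℝ, 0 < δ →
      Filter.Tendsto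
        (fun n => ∑ i ∈ Finset.Icc 1 n,
          ∫ l in (0:ℝ)..δ, (δ - l) / u'' i s (I i s (1 + l)))
        Filter.atTop Filter.atBot)
    (Z : Ω → ℝ) (hZ : MeasBdd (ℱ T) Z) :
    Filter.Tendsto (fun n => H0 P ℱ u n T Z) Filter.atTop
      (nhds (∫ ω, Z ω ∂P)) := by
  choose hu' hcont hmono using hu''
  exact premium_tendsto_expectation_of_many_products_general hu
    (fun i => convexOn_univ_of_monotone_hasDerivAt (hu' i T) (hmono i T)) (hI · T)
    (fun δ hδ => tendsto_sum_leftInverse_atBot (hu · T) (hu' · T) (hcont · T) (hmono · T) (hI · T)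
      hδ (hdiv T le_rfl δ hδ)) hZ
end

section
/- Fix s and suppose that for each i = 1,2,… the function u_{i,s} is C^2 with u_{i,s}'' nondecreasing, and that Σ_{i=1}^∞ ∫_0^δ (δ−λ)/u_{i,s}''(I_{i,s}(1+λ)) dλ = −∞ for every δ > 0, where I_{i,s} is the inverse of u_{i,s}'. Then the sup-convolutions u_s^{(n)}(x) = sup{ Σ_{i=1}^n u_{i,s}(x_i) : Σ_{i=1}^n x_i = x } satisfy lim_{n→∞} u_s^{(n)}(x) = x for every x ∈ ℝ. -/
open Filter

/-- The sup-convolution `u^{(n)}(x) = sup { Σ_{i=1}^n u_i(x_i) : Σ_{i=1}^n x_i = x }`. -/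
noncomputable def supConv (u : ℕ → ℝ → ℝ) (n : ℕ) (x : ℝ) : ℝ :=
  sSup {y | ∃ xs : ℕ → ℝ, (∑ i ∈ Finset.Icc 1 n, xs i) = x ∧
    y = ∑ i ∈ Finset.Icc 1 n, u i (xs i)}

/-!
The integral in the divergence condition is an explicit quantity: substituting `l = u' y - 1` and
writing `w = I (1 + δ)`, the point where `u' w = 1 + δ`, it equals `(1 + δ) * w - u w`, that is,
minus the supremum of `u y - (1 + δ) * y` over `y`. Since `u w ≤ w`, it is at least `δ * w`, so the
divergence condition forces `∑ w i → -∞`.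

Between `w ≤ 0` and `0` concavity keeps `u` above the line of slope `1 + δ`. As `u'` is convex,
`u y - u (-y) ≥ 2 * y` for `y ≥ 0`, so between `0` and `-w` the function `u` lies above the line of
slope `1 - δ`. Once `|x| ≤ -∑ w i`, splitting `x` in proportion to the `w i` therefore gives a value
of at least `x - δ * |x|`, while every splitting gives at most `x`, because `u i y ≤ y`.
-/

section Calculus

variable {f f' F I : ℝ → ℝ} {S : Set ℝ} {c x y : ℝ}

lemma add_mul_sub_le_of_convexOn (hf : ConvexOn ℝ S f) (hx : x ∈ S) (hy : y ∈ S)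
    (hc : HasDerivAt f c x) : f x + c * (y - x) ≤ f y := by
  rcases lt_trichotomy x y with hxy | rfl | hyx
  · have hslope := hf.le_slope_of_hasDerivAt hx hy hxy hc
    rw [slope_def_field, le_div_iff₀ (sub_pos.2 hxy)] at hslope
    linarith
  · simp
  · have hslope := hf.slope_le_of_hasDerivAt hy hx hyx hc
    rw [slope_def_field, div_le_iff₀ (sub_pos.2 hyx)] at hslope
    linarith

lemma le_add_mul_sub_of_concaveOn (hf : ConcaveOn ℝ S f) (hx : x ∈ S) (hy : y ∈ S)
    (hc : HasDerivAt f c x) : f y ≤ f x + c * (y - x) := by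
  have hneg := add_mul_sub_le_of_convexOn hf.neg hx hy hc.neg
  simp only [Pi.neg_apply] at hneg
  linarith

lemma mul_le_map_mul_of_concaveOn (hf : ConcaveOn ℝ Set.univ f) (hf0 : f 0 = 0) {t : ℝ}
    (ht0 : 0 ≤ t) (ht1 : t ≤ 1) (y : ℝ) : t * f y ≤ f (t * y) := by
  simpa [hf0] using hf.2 (Set.mem_univ y) (Set.mem_univ 0) ht0 (sub_nonneg.2 ht1) (by ring)

lemma antitone_of_concaveOn_of_hasDerivAt (hF : ConcaveOn ℝ Set.univ F)
    (hd : ∀ x, HasDerivAt F (f x) x) : Antitone f := by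
  have hanti := hF.antitoneOn_deriv fun x _ => (hd x).differentiableAt
  rwa [antitoneOn_univ, funext fun x => (hd x).deriv] at hanti

lemma convexOn_univ_of_hasDerivAt_of_monotone (hd : ∀ x, HasDerivAt f (f' x) x)
    (hf' : Monotone f') : ConvexOn ℝ Set.univ f :=
  Monotone.convexOn_univ_of_deriv (fun x => (hd x).differentiableAt)
    ((funext fun x => (hd x).deriv : deriv f = f') ▸ hf')

lemma deriv_lt_zero_of_strictAnti_of_monotone (hd : ∀ x, HasDerivAt f (f' x) x)
    (hf : StrictAnti f) (hf' : Monotone f') (x : ℝ) : f' x < 0 := by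
  by_contra! hx
  have htangent := add_mul_sub_le_of_convexOn (convexOn_univ_of_hasDerivAt_of_monotone hd hf')
    (Set.mem_univ x) (Set.mem_univ (x + 1)) (hd x)
  linarith [hf (lt_add_one x)]

lemma exists_ge_of_convexOn (hf : ConvexOn ℝ Set.univ f) (hd : HasDerivAt f c x) (hc : c ≠ 0)
    (p : ℝ) : ∃ y, p ≤ f y := by
  refine ⟨x + (p - f x) / c, ?_⟩
  have htangent := add_mul_sub_le_of_convexOn hf (Set.mem_univ x)
    (Set.mem_univ (x + (p - f x) / c)) hd
  rwa [add_sub_cancel_left, mul_div_cancel₀ _ hc, add_sub_cancel] at htangent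

lemma two_mul_mul_le_sub_of_convexOn_deriv (hF : ∀ x, HasDerivAt F (f x) x)
    (hf : ConvexOn ℝ Set.univ f) (x : ℝ) {h : ℝ} (hh : 0 ≤ h) :
    2 * h * f x ≤ F (x + h) - F (x - h) := by
  have hmid (t : ℝ) : 0 ≤ f (x + t) + f (x - t) - 2 * f x := by
    have := hf.2 (Set.mem_univ (x + t)) (Set.mem_univ (x - t)) (by norm_num : (0 : ℝ) ≤ 1 / 2)
      (by norm_num : (0 : ℝ) ≤ 1 / 2) (by norm_num)
    simp only [smul_eq_mul] at this
    rw [show 1 / 2 * (x + t) + 1 / 2 * (x - t) = x by ring] at this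
    linarith
  have hderiv (t : ℝ) : HasDerivAt (fun t => F (x + t) - F (x - t) - 2 * t * f x)
      (f (x + t) + f (x - t) - 2 * f x) t := by
    have hlin : HasDerivAt (fun t => 2 * t * f x) (2 * f x) t := by
      simpa using ((hasDerivAt_id t).const_mul 2).mul_const (f x)
    have hdiff := ((hF (x + t)).comp_const_add x t).fun_sub ((hF (x - t)).comp_const_sub x t)
    simpa using hdiff.fun_sub hlin
  have hmono := monotone_of_hasDerivAt_nonneg hderiv hmid hh
  simp only [add_zero, sub_zero, mul_zero, zero_mul, sub_self] at hmono
  linarith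

lemma integral_div_deriv_leftInverse (hd : ∀ x, HasDerivAt f (f' x) x) (hf' : ∀ x, f' x < 0)
    (hI : Function.LeftInverse I f) (g : ℝ → ℝ) (a b : ℝ) :
    ∫ p in f a..f b, g p / f' (I p) = ∫ y in a..b, g (f y) := by
  rw [← intervalIntegral.integral_comp_mul_deriv_of_deriv_nonpos
    (fun y _ => (hd y).continuousAt.continuousWithinAt) (fun y _ => hd y)
    (fun y _ => (hf' y).le)]
  refine intervalIntegral.integral_congr fun y _ => ?_
  simp only [Function.comp_apply, hI y, div_mul_cancel₀ _ (hf' y).ne]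

lemma integral_sub_div_deriv_leftInverse (hF : ∀ x, HasDerivAt F (f x) x)
    (hd : ∀ x, HasDerivAt f (f' x) x) (hf' : ∀ x, f' x < 0)
    (hI : Function.LeftInverse I f) (a b : ℝ) :
    ∫ p in f a..f b, (f b - p) / f' (I p) = f b * (b - a) - (F b - F a) := by
  have hcont : Continuous f := continuous_iff_continuousAt.2 fun x => (hd x).continuousAt
  rw [integral_div_deriv_leftInverse hd hf' hI (fun p => f b - p),
    intervalIntegral.integral_sub (by simp) (hcont.intervalIntegrable a b),
    intervalIntegral.integral_eq_sub_of_hasDerivAt (fun x _ => hF x)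
      (hcont.intervalIntegrable a b), intervalIntegral.integral_const, smul_eq_mul, mul_comm]

end Calculus

section MarginalUtility

variable {u u' u'' I : ℝ → ℝ} {δ : ℝ}

lemma le_self_of_concaveOn (hu : ConcaveOn ℝ Set.univ u) (hu0 : u 0 = 0)
    (hd : HasDerivAt u 1 0) (x : ℝ) : u x ≤ x := by
  simpa [hu0] using le_add_mul_sub_of_concaveOn hu (Set.mem_univ 0) (Set.mem_univ x) hd

lemma mul_le_of_concaveOn (hu : ConcaveOn ℝ Set.univ u) (hu0 : u 0 = 0) {c x : ℝ}
    (hd : HasDerivAt u c x) : c * x ≤ u x := by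
  have htangent := le_add_mul_sub_of_concaveOn hu (Set.mem_univ x) (Set.mem_univ 0) hd
  linarith

lemma apply_leftInverse_of_le (hd : ∀ x, HasDerivAt u' (u'' x) x) (hmono : Monotone u'')
    (hneg : ∀ x, u'' x < 0) (hI : Function.LeftInverse I u') {p x : ℝ} (hp : u' x ≤ p) :
    u' (I p) = p := by
  have hcont : Continuous u' := continuous_iff_continuousAt.2 fun y => (hd y).continuousAt
  obtain ⟨y, rfl⟩ := mem_range_of_exists_le_of_exists_ge hcont ⟨x, hp⟩
    (exists_ge_of_convexOn (convexOn_univ_of_hasDerivAt_of_monotone hd hmono) (hd 0)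
      (hneg 0).ne p)
  rw [hI y]

lemma mul_le_integral_div_deriv_leftInverse (hu : ConcaveOn ℝ Set.univ u) (hu0 : u 0 = 0)
    (hu'0 : u' 0 = 1) (hd : ∀ x, HasDerivAt u (u' x) x) (hd' : ∀ x, HasDerivAt u' (u'' x) x)
    (hneg : ∀ x, u'' x < 0) (hI : Function.LeftInverse I u') (hδ : u' (I (1 + δ)) = 1 + δ) :
    δ * I (1 + δ) ≤ ∫ l in (0 : ℝ)..δ, (δ - l) / u'' (I (1 + l)) := by
  have hshift : ∫ l in (0 : ℝ)..δ, (δ - l) / u'' (I (1 + l)) =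
      ∫ p in (1 : ℝ)..1 + δ, (1 + δ - p) / u'' (I p) := by
    simpa using intervalIntegral.integral_comp_add_left
      (fun p => (1 + δ - p) / u'' (I p)) (a := 0) (b := δ) 1
  have hconj := integral_sub_div_deriv_leftInverse hd hd' hneg hI 0 (I (1 + δ))
  rw [hδ, hu'0, hu0] at hconj
  rw [hshift, hconj]
  linarith [le_self_of_concaveOn hu hu0 (hu'0 ▸ hd 0) (I (1 + δ))]

end MarginalUtility

section SupConv

variable {u : ℕ → ℝ → ℝ} {n : ℕ} {x : ℝ}

lemma sum_le_supConv (hle : ∀ i y, u i y ≤ y) {xs : ℕ → ℝ}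
    (hxs : ∑ i ∈ Finset.Icc 1 n, xs i = x) :
    ∑ i ∈ Finset.Icc 1 n, u i (xs i) ≤ supConv u n x := by
  refine le_csSup ⟨x, ?_⟩ ⟨xs, hxs, rfl⟩
  rintro _ ⟨ys, rfl, rfl⟩
  exact Finset.sum_le_sum fun i _ => hle i (ys i)

-- For `n = 0` and `x < 0` the supremum is over the empty set, hence equal to `0 > x`.
lemma supConv_le_self (hle : ∀ i y, u i y ≤ y) (hn : n ≠ 0) : supConv u n x ≤ x := by
  have hsum : ∑ _i ∈ Finset.Icc 1 n, x / n = x := by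
    simp [mul_div_cancel₀ x (Nat.cast_ne_zero.2 hn : (n : ℝ) ≠ 0)]
  refine csSup_le ⟨_, fun _ => x / n, hsum, rfl⟩ ?_
  rintro _ ⟨ys, rfl, rfl⟩
  exact Finset.sum_le_sum fun i _ => hle i (ys i)

lemma mul_le_supConv (hu : ∀ i, ConcaveOn ℝ Set.univ (u i)) (hu0 : ∀ i, u i 0 = 0)
    (hle : ∀ i y, u i y ≤ y) {c : ℝ} {ys : ℕ → ℝ} (hys : ∀ i, c * ys i ≤ u i (ys i))
    (hx : x ∈ Set.uIcc 0 (∑ i ∈ Finset.Icc 1 n, ys i)) : c * x ≤ supConv u n x := by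
  rw [← segment_eq_uIcc, segment_eq_image] at hx
  obtain ⟨t, ⟨ht0, ht1⟩, hxt⟩ := hx
  have hsum : ∑ i ∈ Finset.Icc 1 n, t * ys i = x := by
    rw [← Finset.mul_sum, ← hxt]
    simp
  calc c * x = ∑ i ∈ Finset.Icc 1 n, t * (c * ys i) := by
        rw [← hsum, Finset.mul_sum]
        exact Finset.sum_congr rfl fun i _ => mul_left_comm c t (ys i)
    _ ≤ ∑ i ∈ Finset.Icc 1 n, u i (t * ys i) := Finset.sum_le_sum fun i _ =>
        (mul_le_mul_of_nonneg_left (hys i) ht0).trans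
          (mul_le_map_mul_of_concaveOn (hu i) (hu0 i) ht0 ht1 (ys i))
    _ ≤ supConv u n x := sum_le_supConv hle hsum

lemma sub_mul_abs_le_supConv (hu : ∀ i, ConcaveOn ℝ Set.univ (u i)) (hu0 : ∀ i, u i 0 = 0)
    (hle : ∀ i y, u i y ≤ y) (hodd : ∀ i y, 0 ≤ y → 2 * y ≤ u i y - u i (-y)) {δ : ℝ}
    {w : ℕ → ℝ} (hw0 : ∀ i, w i ≤ 0) (hw : ∀ i, (1 + δ) * w i ≤ u i (w i))
    (hx : ∑ i ∈ Finset.Icc 1 n, w i ≤ -|x|) : x - δ * |x| ≤ supConv u n x := by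
  rcases le_total x 0 with hx0 | hx0
  · rw [abs_of_nonpos hx0] at hx ⊢
    have hbound := mul_le_supConv hu hu0 hle hw (x := x) (n := n)
      (Set.mem_uIcc.2 (Or.inr ⟨by linarith, hx0⟩))
    linarith
  · rw [abs_of_nonneg hx0] at hx ⊢
    have hreflect (i : ℕ) : (1 - δ) * -w i ≤ u i (-w i) := by
      have := hodd i (-w i) (neg_nonneg.2 (hw0 i))
      rw [neg_neg] at this
      linarith [hw i]
    have hbound := mul_le_supConv hu hu0 hle hreflect (x := x) (n := n)
      (Set.mem_uIcc.2 (Or.inl ⟨hx0, by rw [Finset.sum_neg_distrib]; linarith⟩))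
    linarith

lemma tendsto_supConv_of_eventually_le (hle : ∀ i y, u i y ≤ y)
    (hlow : ∀ δ > 0, ∀ᶠ n in atTop, x - δ * |x| ≤ supConv u n x) :
    Tendsto (fun n => supConv u n x) atTop (nhds x) := by
  refine tendsto_order.2 ⟨fun a ha => ?_, fun b hb => ?_⟩
  · obtain ⟨δ, hδ, hδx⟩ := exists_pos_mul_lt (sub_pos.2 ha) |x|
    filter_upwards [hlow δ hδ] with n hn
    linarith
  · filter_upwards [eventually_ne_atTop 0] with n hn
    exact (supConv_le_self hle hn).trans_lt hb

end SupConv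

theorem supConv_tendsto_id_general
    (u u' u'' : ℕ → ℝ → ℝ)
    (hu : ∀ i, ConcaveOn ℝ Set.univ (u i))
    (hu0 : ∀ i, u i 0 = 0)
    (hu'0 : ∀ i, u' i 0 = 1)
    (hd : ∀ i x, HasDerivAt (u i) (u' i x) x)
    (hd' : ∀ i x, HasDerivAt (u' i) (u'' i x) x)
    (hmono : ∀ i, Monotone (u'' i))
    (I : ℕ → ℝ → ℝ) (hI : ∀ i, Function.LeftInverse (I i) (u' i))
    (hdiv : ∀ δ : ℝ, 0 < δ →
      Tendsto (fun n => ∑ i ∈ Finset.Icc 1 n,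
          ∫ l in (0 : ℝ)..δ, (δ - l) / u'' i (I i (1 + l)))
        atTop atBot)
    (x : ℝ) : Tendsto (fun n => supConv u n x) atTop (nhds x) := by
  have hanti (i : ℕ) : StrictAnti (u' i) :=
    (antitone_of_concaveOn_of_hasDerivAt (hu i) (hd i)).strictAnti_of_injective (hI i).injective
  have hneg (i : ℕ) := deriv_lt_zero_of_strictAnti_of_monotone (hd' i) (hanti i) (hmono i)
  have hle (i : ℕ) := le_self_of_concaveOn (hu i) (hu0 i) (hu'0 i ▸ hd i 0)
  have hodd (i : ℕ) (y : ℝ) (hy : 0 ≤ y) : 2 * y ≤ u i y - u i (-y) := by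
    simpa [hu'0 i] using two_mul_mul_le_sub_of_convexOn_deriv (hd i)
      (convexOn_univ_of_hasDerivAt_of_monotone (hd' i) (hmono i)) 0 hy
  refine tendsto_supConv_of_eventually_le hle fun δ hδ => ?_
  have hslope (i : ℕ) : u' i (I i (1 + δ)) = 1 + δ :=
    apply_leftInverse_of_le (hd' i) (hmono i) (hneg i) (hI i) (x := 0) (by linarith [hu'0 i])
  have hw0 (i : ℕ) : I i (1 + δ) ≤ 0 :=
    (hanti i).le_iff_ge.1 (by linarith [hu'0 i, hslope i])
  have hw (i : ℕ) : (1 + δ) * I i (1 + δ) ≤ u i (I i (1 + δ)) := by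
    simpa only [hslope i] using mul_le_of_concaveOn (hu i) (hu0 i) (hd i (I i (1 + δ)))
  filter_upwards [(hdiv δ hδ).eventually_le_atBot (δ * -|x|)] with n hn
  refine sub_mul_abs_le_supConv hu hu0 hle hodd hw0 hw (le_of_mul_le_mul_left ?_ hδ)
  rw [Finset.mul_sum]
  exact (Finset.sum_le_sum fun i _ => mul_le_integral_div_deriv_leftInverse (hu i) (hu0 i)
    (hu'0 i) (hd i) (hd' i) (hneg i) (hI i) (hslope i)).trans hn

/-- Lemma 3.5: under the divergence condition on the second derivatives,
the sup-convolutions converge pointwise to the identity: `u^{(n)}(x) → x`. -/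
theorem supConv_tendsto_id
    (u u' u'' : ℕ → ℝ → ℝ)
    (hu : ∀ i, IsUtility (u i) (u' i))
    -- `C²` with nondecreasing second derivative:
    (hu'' : ∀ i, (∀ x, HasDerivAt (u' i) (u'' i x) x) ∧
      Continuous (u'' i) ∧ Monotone (u'' i))
    -- `I i` is the inverse function of `u' i`:
    (I : ℕ → ℝ → ℝ) (hI : ∀ i, ∀ x : ℝ, I i (u' i x) = x)
    -- the divergence condition (3.1):
    (hdiv : ∀ δ : ℝ, 0 < δ →
      Tendsto (fun n => ∑ i ∈ Finset.Icc 1 n,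
          ∫ l in (0:ℝ)..δ, (δ - l) / u'' i (I i (1 + l)))
        atTop atBot) :
    ∀ x : ℝ, Tendsto (fun n => supConv u n x) atTop (nhds x) := by
  exact supConv_tendsto_id_general u u' u'' (fun i => (hu i).strictConcave.concaveOn)
    (fun i => (hu i).zero) (fun i => (hu i).deriv_zero) (fun i => (hu i).hasDeriv)
    (fun i => (hu'' i).1) (fun i => (hu'' i).2.2) I hI hdiv
end

section
/- Suppose 𝓕_0 is P-trivial, the utilities are exponential, u_{i,s}(x) = (1/α_{i,s})(1 − e^{−α_{i,s}x}) with α_{i,s} > 0, and the double sequence (α_{i,s})_{i≥1, 0≤s≤T} is bounded. Then for every Z ∈ L^∞_T there is a constant C = C(Z) such that for all n, | H_{n,0}(Z) − E[Z] − (1/2) Σ_{t=1}^T β_t^{(n)} E[(ΔZ_t)^2] | ≤ C n^{−2}, where ΔZ_t = E[Z | 𝓕_t] − E[Z | 𝓕_{t−1}] and β_t^{(n)} is defined by 1/β_t^{(n)} = Σ_{s=t}^T Σ_{i=1}^n 1/α_{i,s}. In particular H_{n,0}(Z) = E[Z] + (1/2) Σ_{t=1}^T β_t^{(n)} E[(ΔZ_t)^2]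 + O(n^{−2}) as n → ∞. -/
open MeasureTheory Filter

variable {Ω : Type*}

/-!
Write `ρ_t(Y) = β⁻¹ log E[exp (β Y) | 𝓕_t]`, so that `H_t = ρ_t(H_{t+1})`. For `|Y| ≤ K`, centring
`Y` and expanding `exp` and `log` gives `ρ_t(Y) = E[Y | 𝓕_t] + (β/2) Var[Y | 𝓕_t] + O(K³ β²)`, with
a constant that is uniform in `β > 0`: Taylor's formula covers small `β K`, and Hoeffding's bound
`0 ≤ ρ_t(Y) - E[Y | 𝓕_t] ≤ 2 K² β` covers large `β K`. Hoeffding's bound also shows, by backward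
induction, that `H_t = E[Z | 𝓕_t] + O(max β)`. Replacing `H_{t+1}` by `E[Z | 𝓕_{t+1}]` in the
variance term therefore costs only `O((max β)²)`, and the one-step expansions add up by the tower
property. Finally `max_t β_t^{(n)} = O(1/n)`, because each `1/β_t^{(n)}` is a sum of at least `n`
terms that are bounded away from zero.
-/

section RealEstimates

lemma abs_exp_sub_quadratic_le {x : ℝ} (hx : |x| ≤ 1) :
    |Real.exp x - (1 + x + x ^ 2 / 2)| ≤ 2 / 9 * |x| ^ 3 := by
  have taylor := Real.exp_bound hx (n := 3) (by norm_num)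
  norm_num [Finset.sum_range_succ, Nat.factorial] at taylor
  linarith

lemma exp_le_cosh_add_mul_sinh {a x : ℝ} (hx : |x| ≤ a) :
    Real.exp x ≤ Real.cosh a + a⁻¹ * Real.sinh a * x := by
  rcases (abs_nonneg x |>.trans hx).eq_or_lt with rfl | ha
  · simp [abs_nonpos_iff.1 hx]
  · have hxa : |x / a| ≤ 1 := by rwa [abs_div, abs_of_pos ha, div_le_one ha]
    have chord := Real.exp_mul_le_cosh_add_mul_sinh hxa a
    rw [div_mul_cancel₀ x ha.ne'] at chord
    exact chord.trans_eq (by ring)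

lemma abs_log_sub_sub_one_le_sq {w : ℝ} (hw : 1 ≤ w) : |Real.log w - (w - 1)| ≤ (w - 1) ^ 2 := by
  have hw0 : 0 < w := by linarith
  have log_le : Real.log w ≤ w - 1 := Real.log_le_sub_one_of_pos hw0
  have le_log : 1 - w⁻¹ ≤ Real.log w := Real.one_sub_inv_le_log_of_pos hw0
  have gap : w - 1 - (1 - w⁻¹) = (w - 1) ^ 2 / w := by field_simp
  have gap_le : (w - 1) ^ 2 / w ≤ (w - 1) ^ 2 := div_le_self (sq_nonneg _) hw
  rw [abs_le]
  constructor <;> linarith [sq_nonneg (w - 1)]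

lemma abs_log_sub_half_le_cube {a w q : ℝ} (ha : 0 ≤ a) (hw : 1 ≤ w)
    (hw_le : w ≤ Real.exp (a ^ 2 / 2)) (hq : 0 ≤ q) (hq_le : q ≤ a ^ 2)
    (taylor : a ≤ 1 → |w - (1 + q / 2)| ≤ 2 / 9 * a ^ 3) :
    |Real.log w - q / 2| ≤ a ^ 3 := by
  rcases le_total a 1 with ha1 | ha1
  · have cube_le_sq : a ^ 3 ≤ a ^ 2 := pow_le_pow_of_le_one ha ha1 (by norm_num)
    have w_bounds := abs_le.1 (taylor ha1)
    have log_bounds := abs_le.1 (abs_log_sub_sub_one_le_sq hw)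
    have sq_le : (w - 1) ^ 2 ≤ 7 / 9 * a ^ 3 := calc
      (w - 1) ^ 2 ≤ (13 / 18 * a ^ 2) ^ 2 := by gcongr; linarith
      _ = a * (169 / 324 * a ^ 3) := by ring
      _ ≤ 1 * (169 / 324 * a ^ 3) := by gcongr
      _ ≤ 7 / 9 * a ^ 3 := by linarith [pow_nonneg ha 3]
    rw [abs_le]
    constructor <;> linarith
  · have sq_le_cube : a ^ 2 ≤ a ^ 3 := pow_le_pow_right₀ ha1 (by norm_num)
    have log_nonneg : 0 ≤ Real.log w := Real.log_nonneg hw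
    have log_le : Real.log w ≤ a ^ 2 / 2 := (Real.log_le_iff_le_exp (by linarith)).2 hw_le
    rw [abs_le]
    constructor <;> linarith [sq_nonneg a]

lemma card_div_le_sum_inv {ι : Type*} {s : Finset ι} {a : ι → ℝ} {B : ℝ}
    (ha : ∀ i ∈ s, 0 < a i) (hB : ∀ i ∈ s, a i ≤ B) :
    (s.card : ℝ) / B ≤ ∑ i ∈ s, (a i)⁻¹ := by
  rw [div_eq_mul_inv, ← nsmul_eq_mul]
  exact s.card_nsmul_le_sum _ _ fun i hi => inv_anti₀ (ha i hi) (hB i hi)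

end RealEstimates

section CondExp

open scoped ProbabilityTheory

variable {m m0 : MeasurableSpace Ω} {P : Measure Ω}

lemma condExp_ae_eq_integral_of_measure_eq_zero_or_one [IsProbabilityMeasure P] (hm : m ≤ m0)
    (htriv : ∀ A, MeasurableSet[m] A → P A = 0 ∨ P A = 1) (f : Ω → ℝ) :
    P[f | m] =ᵐ[P] fun _ => ∫ ω, f ω ∂P := by
  have indep : ProbabilityTheory.Indep m m P := by
    rw [ProbabilityTheory.Indep_iff]
    intro A B hA _
    rcases htriv A hA with hA0 | hA1
    · rw [hA0, zero_mul]
      exact measure_mono_null Set.inter_subset_left hA0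
    · rw [hA1, one_mul, Set.inter_comm]
      exact measure_inter_conull ((prob_compl_eq_zero_iff (hm _ hA)).2 hA1)
  have const := condExp_indep_eq hm hm
    (stronglyMeasurable_condExp (f := f) (μ := P)) indep
  rwa [condExp_of_stronglyMeasurable hm stronglyMeasurable_condExp integrable_condExp,
    integral_condExp hm] at const

lemma ae_abs_condExp_sub_condExp_le {f g : Ω → ℝ} {R : ℝ} (hf : Integrable f P)
    (hg : Integrable g P) (hfg : ∀ᵐ ω ∂P, |f ω - g ω| ≤ R) :
    ∀ᵐ ω ∂P, |P[f | m] ω - P[g | m] ω| ≤ R := by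
  filter_upwards [condExp_sub hf hg m, ae_bdd_abs_condExp_of_ae_bdd_abs (m := m) (f := f - g) hfg]
    with ω hsub hbound
  rwa [← Pi.sub_apply, ← hsub]

lemma condExp_sub_condExp_ae_eq_zero [IsFiniteMeasure P] (hm : m ≤ m0) {X : Ω → ℝ}
    (hX : Integrable X P) : P[X - P[X | m] | m] =ᵐ[P] 0 := by
  filter_upwards [condExp_sub hX integrable_condExp m] with ω hsub
  rw [hsub, condExp_of_stronglyMeasurable hm stronglyMeasurable_condExp integrable_condExp]
  simp

lemma ae_abs_sub_condExp_le {X : Ω → ℝ} {a : ℝ} (hXa : ∀ᵐ ω ∂P, |X ω| ≤ a) :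
    ∀ᵐ ω ∂P, |(X - P[X | m]) ω| ≤ 2 * a := by
  filter_upwards [hXa, ae_bdd_abs_condExp_of_ae_bdd_abs (m := m) hXa] with ω hω hmean
  exact (abs_sub _ _).trans (by linarith)

lemma integrable_exp_of_ae_abs_le [IsFiniteMeasure P] {X : Ω → ℝ} {a : ℝ}
    (hX : AEStronglyMeasurable X P) (hXa : ∀ᵐ ω ∂P, |X ω| ≤ a) :
    Integrable (fun ω => Real.exp (X ω)) P := by
  simpa using ProbabilityTheory.integrable_exp_mul_of_mem_Icc (t := 1) hX.aemeasurable
    (hXa.mono fun _ => abs_le.1)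

lemma integrable_sq_of_ae_abs_le [IsFiniteMeasure P] {X : Ω → ℝ} {a : ℝ}
    (hX : AEStronglyMeasurable X P) (hXa : ∀ᵐ ω ∂P, |X ω| ≤ a) :
    Integrable (X ^ 2) P :=
  (MemLp.of_bound hX a hXa).integrable_sq

lemma ae_abs_condVar_sub_condVar_le [IsFiniteMeasure P] (hm : m ≤ m0) {X Y : Ω → ℝ} {K c : ℝ}
    (hX : AEStronglyMeasurable X P) (hY : AEStronglyMeasurable Y P)
    (hXK : ∀ᵐ ω ∂P, |X ω| ≤ K) (hYK : ∀ᵐ ω ∂P, |Y ω| ≤ K)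
    (hXY : ∀ᵐ ω ∂P, |X ω - Y ω| ≤ c) :
    ∀ᵐ ω ∂P, |Var[X; P | m] ω - Var[Y; P | m] ω| ≤ 4 * K * c := by
  have abs_sq_sub_sq_le {x y : ℝ} (hx : |x| ≤ K) (hy : |y| ≤ K) (hxy : |x - y| ≤ c) :
      |x ^ 2 - y ^ 2| ≤ 2 * K * c := by
    rw [sq_sub_sq, abs_mul]
    have hsum : |x + y| ≤ 2 * K := (abs_add_le x y).trans (by linarith)
    have := (abs_nonneg _).trans hsum
    gcongr
  have second_moments := ae_abs_condExp_sub_condExp_le (m := m)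
    (integrable_sq_of_ae_abs_le hX hXK) (integrable_sq_of_ae_abs_le hY hYK)
    (by filter_upwards [hXK, hYK, hXY] with ω using abs_sq_sub_sq_le)
  have means := ae_abs_condExp_sub_condExp_le (m := m) (.of_bound hX K hXK) (.of_bound hY K hYK) hXY
  filter_upwards [second_moments, means, ae_bdd_abs_condExp_of_ae_bdd_abs (m := m) hXK,
    ae_bdd_abs_condExp_of_ae_bdd_abs (m := m) hYK,
    ProbabilityTheory.condVar_ae_eq_condExp_sq_sub_sq_condExp hm (.of_bound hX K hXK),
    ProbabilityTheory.condVar_ae_eq_condExp_sq_sub_sq_condExp hm (.of_bound hY K hYK)]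
    with ω hsq hmean hXω hYω hvarX hvarY
  have hmean_sq := abs_sq_sub_sq_le hXω hYω hmean
  rw [hvarX, hvarY]
  simp only [Pi.sub_apply, Pi.pow_apply]
  rw [abs_le] at *
  constructor <;> linarith

end CondExp

section CondExpExp

open scoped ProbabilityTheory

variable {m m0 : MeasurableSpace Ω} {P : Measure Ω} [IsFiniteMeasure P] {X : Ω → ℝ} {a : ℝ}

lemma exp_condExp_ae_le_condExp_exp (hm : m ≤ m0) (hX : AEStronglyMeasurable X P)
    (hXa : ∀ᵐ ω ∂P, |X ω| ≤ a) :
    ∀ᵐ ω ∂P, Real.exp (P[X | m] ω) ≤ P[fun ω' => Real.exp (X ω') | m] ω :=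
  convexOn_exp.map_condExp_le_univ hm Real.continuous_exp.lowerSemicontinuous
    (.of_bound hX a hXa) (integrable_exp_of_ae_abs_le hX hXa)

lemma condExp_exp_ae_le_exp_half_sq (hm : m ≤ m0) (hX : AEStronglyMeasurable X P)
    (hXa : ∀ᵐ ω ∂P, |X ω| ≤ a) (hcentred : P[X | m] =ᵐ[P] 0) :
    ∀ᵐ ω ∂P, P[fun ω' => Real.exp (X ω') | m] ω ≤ Real.exp (a ^ 2 / 2) := by
  have hXint : Integrable X P := .of_bound hX a hXa
  have hconst : Integrable (fun _ : Ω => Real.cosh a) P := integrable_const _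
  set slope := a⁻¹ * Real.sinh a
  have chord := condExp_mono (m := m) (integrable_exp_of_ae_abs_le hX hXa)
    (hconst.add (hXint.smul slope)) (hXa.mono fun _ => exp_le_cosh_add_mul_sinh)
  filter_upwards [chord, condExp_add hconst (hXint.smul slope) m, condExp_smul slope X m, hcentred]
    with ω hchord hadd hsmul hzero
  rw [hadd, Pi.add_apply, condExp_const hm, hsmul, Pi.smul_apply, hzero] at hchord
  simpa using hchord.trans (by simpa using Real.cosh_le_exp_half_sq a)

lemma ae_abs_condExp_exp_sub_le (hm : m ≤ m0) (hX : AEStronglyMeasurable X P)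
    (hXa : ∀ᵐ ω ∂P, |X ω| ≤ a) (ha : a ≤ 1) (hcentred : P[X | m] =ᵐ[P] 0) :
    ∀ᵐ ω ∂P, |P[fun ω' => Real.exp (X ω') | m] ω - (1 + P[X ^ 2 | m] ω / 2)| ≤ 2 / 9 * a ^ 3 := by
  have hXint : Integrable X P := .of_bound hX a hXa
  have hsq : Integrable ((2⁻¹ : ℝ) • X ^ 2) P := (integrable_sq_of_ae_abs_le hX hXa).smul _
  have hone : Integrable (fun _ : Ω => (1 : ℝ)) P := integrable_const _
  have taylor := ae_abs_condExp_sub_condExp_le (m := m) (R := 2 / 9 * a ^ 3)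
    (integrable_exp_of_ae_abs_le hX hXa) ((hone.add hXint).add hsq) (by
      filter_upwards [hXa] with ω hω
      simp only [Pi.add_apply, Pi.smul_apply, Pi.pow_apply, smul_eq_mul, inv_mul_eq_div]
      exact (abs_exp_sub_quadratic_le (hω.trans ha)).trans (by gcongr))
  filter_upwards [taylor, condExp_add (hone.add hXint) hsq m, condExp_add hone hXint m,
    condExp_smul (2⁻¹ : ℝ) (X ^ 2) m, hcentred] with ω hω hadd₂ hadd₁ hsmul hzero
  rw [hadd₂, Pi.add_apply, hadd₁, Pi.add_apply, hzero, hsmul, condExp_const hm] at hω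
  simpa [inv_mul_eq_div] using hω

lemma ae_abs_log_condExp_exp_sub_half_condExp_sq_le (hm : m ≤ m0) (hX : AEStronglyMeasurable X P)
    (hXa : ∀ᵐ ω ∂P, |X ω| ≤ a) (hcentred : P[X | m] =ᵐ[P] 0) :
    ∀ᵐ ω ∂P, |Real.log (P[fun ω' => Real.exp (X ω') | m] ω) - P[X ^ 2 | m] ω / 2| ≤ a ^ 3 := by
  have sq_nonneg : 0 ≤ᵐ[P] P[X ^ 2 | m] := condExp_nonneg (.of_forall fun ω => sq_nonneg (X ω))
  have sq_le : ∀ᵐ ω ∂P, |P[X ^ 2 | m] ω| ≤ a ^ 2 := by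
    refine ae_bdd_abs_condExp_of_ae_bdd_abs (hXa.mono fun ω hω => ?_)
    rw [Pi.pow_apply, abs_pow]
    gcongr
  have taylor : ∀ᵐ ω ∂P, a ≤ 1 →
      |P[fun ω' => Real.exp (X ω') | m] ω - (1 + P[X ^ 2 | m] ω / 2)| ≤ 2 / 9 * a ^ 3 :=
    eventually_imp_distrib_left.2 fun ha => ae_abs_condExp_exp_sub_le hm hX hXa ha hcentred
  filter_upwards [hXa, exp_condExp_ae_le_condExp_exp hm hX hXa,
    condExp_exp_ae_le_exp_half_sq hm hX hXa hcentred, sq_nonneg, sq_le, taylor, hcentred]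
    with ω hω hjensen hhoeffding hsq hsq_le htaylor hzero
  rw [hzero, Pi.zero_apply, Real.exp_zero] at hjensen
  exact abs_log_sub_half_le_cube ((abs_nonneg _).trans hω) hjensen hhoeffding hsq
    ((le_abs_self _).trans hsq_le) htaylor

lemma log_condExp_exp_ae_eq (hm : m ≤ m0) (hX : AEStronglyMeasurable X P)
    (hXa : ∀ᵐ ω ∂P, |X ω| ≤ a) :
    ∀ᵐ ω ∂P, Real.log (P[fun ω' => Real.exp (X ω') | m] ω) =
      P[X | m] ω + Real.log (P[fun ω' => Real.exp ((X - P[X | m]) ω') | m] ω) := by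
  have hbound := ae_abs_sub_condExp_le (m := m) hXa
  have hXc : AEStronglyMeasurable (X - P[X | m]) P := hX.sub integrable_condExp.1
  have hfactor : (fun ω => Real.exp (X ω)) =
      (fun ω => Real.exp (P[X | m] ω)) * fun ω => Real.exp ((X - P[X | m]) ω) := by
    ext ω
    rw [Pi.mul_apply, ← Real.exp_add, Pi.sub_apply, add_sub_cancel]
  have hpull := condExp_mul_of_stronglyMeasurable_left (m := m)
    (Real.continuous_exp.comp_stronglyMeasurable stronglyMeasurable_condExp)
    (hfactor ▸ integrable_exp_of_ae_abs_le hX hXa) (integrable_exp_of_ae_abs_le hXc hbound)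
  filter_upwards [hpull, exp_condExp_ae_le_condExp_exp hm hXc hbound] with ω hω hjensen
  rw [hfactor, hω, Pi.mul_apply, Real.log_mul (Real.exp_ne_zero _)
    ((Real.exp_pos _).trans_le hjensen).ne', Real.log_exp]

lemma ae_abs_log_condExp_exp_le (hm : m ≤ m0) (hX : AEStronglyMeasurable X P)
    (hXa : ∀ᵐ ω ∂P, |X ω| ≤ a) :
    ∀ᵐ ω ∂P, |Real.log (P[fun ω' => Real.exp (X ω') | m] ω)| ≤ a := by
  have hexp := integrable_exp_of_ae_abs_le hX hXa
  have lower := condExp_mono (m := m) (integrable_const (Real.exp (-a))) hexp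
    (hXa.mono fun ω hω => Real.exp_le_exp.2 (abs_le.1 hω).1)
  have upper := condExp_mono (m := m) hexp (integrable_const (Real.exp a))
    (hXa.mono fun ω hω => Real.exp_le_exp.2 (abs_le.1 hω).2)
  rw [condExp_const hm] at lower upper
  filter_upwards [lower, upper] with ω hlower hupper
  have hpos := (Real.exp_pos _).trans_le hlower
  exact abs_le.2 ⟨(Real.le_log_iff_exp_le hpos).2 hlower, (Real.log_le_iff_le_exp hpos).2 hupper⟩

lemma ae_abs_log_condExp_exp_sub_condExp_le (hm : m ≤ m0) (hX : AEStronglyMeasurable X P)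
    (hXa : ∀ᵐ ω ∂P, |X ω| ≤ a) :
    ∀ᵐ ω ∂P, |Real.log (P[fun ω' => Real.exp (X ω') | m] ω) - P[X | m] ω| ≤ 2 * a ^ 2 := by
  have hbound := ae_abs_sub_condExp_le (m := m) hXa
  have hXc : AEStronglyMeasurable (X - P[X | m]) P := hX.sub integrable_condExp.1
  have hcentred := condExp_sub_condExp_ae_eq_zero hm (.of_bound hX a hXa)
  filter_upwards [log_condExp_exp_ae_eq hm hX hXa, hcentred,
    exp_condExp_ae_le_condExp_exp hm hXc hbound,
    condExp_exp_ae_le_exp_half_sq hm hXc hbound hcentred] with ω hsplit hzero hjensen hhoeffding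
  rw [hzero, Pi.zero_apply, Real.exp_zero] at hjensen
  rw [hsplit, add_sub_cancel_left, abs_of_nonneg (Real.log_nonneg hjensen),
    Real.log_le_iff_le_exp (by linarith)]
  exact hhoeffding.trans_eq (by ring_nf)

lemma ae_abs_log_condExp_exp_sub_condExp_sub_half_condVar_le (hm : m ≤ m0)
    (hX : AEStronglyMeasurable X P) (hXa : ∀ᵐ ω ∂P, |X ω| ≤ a) :
    ∀ᵐ ω ∂P, |Real.log (P[fun ω' => Real.exp (X ω') | m] ω) - P[X | m] ω - Var[X; P | m] ω / 2| ≤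
      8 * a ^ 3 := by
  have hXc : AEStronglyMeasurable (X - P[X | m]) P := hX.sub integrable_condExp.1
  filter_upwards [log_condExp_exp_ae_eq hm hX hXa,
    ae_abs_log_condExp_exp_sub_half_condExp_sq_le hm hXc (ae_abs_sub_condExp_le hXa)
      (condExp_sub_condExp_ae_eq_zero hm (.of_bound hX a hXa))] with ω hsplit hω
  rw [hsplit, add_sub_cancel_left]
  exact hω.trans_eq (by ring)

end CondExpExp

/-- The conditional certainty equivalent of the liability `Y` under exponential utility with risk
aversion `β`, i.e. one step of the backward recursion that defines the premium process. -/
noncomputable def condEntropic {_ : MeasurableSpace Ω} (P : Measure Ω) (m : MeasurableSpace Ω)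
    (β : ℝ) (Y : Ω → ℝ) : Ω → ℝ :=
  fun ω => β⁻¹ * Real.log (P[fun ω' => Real.exp (β * Y ω') | m] ω)

section CondEntropic

open scoped ProbabilityTheory

variable {m m0 : MeasurableSpace Ω} {P : Measure Ω} {Y : Ω → ℝ} {β K : ℝ}

lemma stronglyMeasurable_condEntropic : StronglyMeasurable[m] (condEntropic P m β Y) :=
  (stronglyMeasurable_condExp.measurable.log.const_mul _).stronglyMeasurable

lemma ae_abs_const_smul_le (hβ : 0 < β) (hYK : ∀ᵐ ω ∂P, |Y ω| ≤ K) :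
    ∀ᵐ ω ∂P, |(β • Y) ω| ≤ β * K := by
  filter_upwards [hYK] with ω hω
  rw [Pi.smul_apply, smul_eq_mul, abs_mul, abs_of_pos hβ]
  gcongr

variable [IsFiniteMeasure P]

lemma ae_abs_condEntropic_le (hm : m ≤ m0) (hβ : 0 < β) (hY : AEStronglyMeasurable Y P)
    (hYK : ∀ᵐ ω ∂P, |Y ω| ≤ K) :
    ∀ᵐ ω ∂P, |condEntropic P m β Y ω| ≤ K := by
  filter_upwards [ae_abs_log_condExp_exp_le hm (hY.const_smul β) (ae_abs_const_smul_le hβ hYK)]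
    with ω hω
  rw [condEntropic, abs_mul, abs_inv, abs_of_pos hβ, inv_mul_le_iff₀ hβ]
  exact hω

lemma ae_abs_condEntropic_sub_condExp_le (hm : m ≤ m0) (hβ : 0 < β)
    (hY : AEStronglyMeasurable Y P) (hYK : ∀ᵐ ω ∂P, |Y ω| ≤ K) :
    ∀ᵐ ω ∂P, |condEntropic P m β Y ω - P[Y | m] ω| ≤ 2 * K ^ 2 * β := by
  filter_upwards [ae_abs_log_condExp_exp_sub_condExp_le hm (hY.const_smul β)
    (ae_abs_const_smul_le hβ hYK), condExp_smul β Y m] with ω hω hmean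
  rw [hmean, Pi.smul_apply, smul_eq_mul] at hω
  have rescale : condEntropic P m β Y ω - P[Y | m] ω =
      β⁻¹ * (Real.log (P[fun ω' => Real.exp ((β • Y) ω') | m] ω) - β * P[Y | m] ω) := by
    rw [mul_sub, inv_mul_cancel_left₀ hβ.ne']
    rfl
  rw [rescale, abs_mul, abs_inv, abs_of_pos hβ, inv_mul_le_iff₀ hβ]
  exact hω.trans_eq (by ring)

lemma ae_abs_condEntropic_sub_condExp_sub_condVar_le (hm : m ≤ m0) (hβ : 0 < β)
    (hY : AEStronglyMeasurable Y P) (hYK : ∀ᵐ ω ∂P, |Y ω| ≤ K) :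
    ∀ᵐ ω ∂P, |condEntropic P m β Y ω - P[Y | m] ω - β / 2 * Var[Y; P | m] ω| ≤
      8 * K ^ 3 * β ^ 2 := by
  filter_upwards [ae_abs_log_condExp_exp_sub_condExp_sub_half_condVar_le hm (hY.const_smul β)
    (ae_abs_const_smul_le hβ hYK), condExp_smul β Y m,
    ProbabilityTheory.condVar_smul (m := m) (μ := P) β Y] with ω hω hmean hvar
  rw [hmean, hvar, Pi.smul_apply, Pi.smul_apply, smul_eq_mul, smul_eq_mul] at hω
  have rescale : condEntropic P m β Y ω - P[Y | m] ω - β / 2 * Var[Y; P | m] ω =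
      β⁻¹ * (Real.log (P[fun ω' => Real.exp ((β • Y) ω') | m] ω) - β * P[Y | m] ω -
        β ^ 2 * Var[Y; P | m] ω / 2) := by
    simp only [condEntropic, Pi.smul_apply, smul_eq_mul]
    field_simp
  rw [rescale, abs_mul, abs_inv, abs_of_pos hβ, inv_mul_le_iff₀ hβ]
  exact hω.trans_eq (by ring)

end CondEntropic

/-- The Doob martingale increment `ΔZ_t = E[Z | 𝓕_t] - E[Z | 𝓕_{t-1}]`, meant for `1 ≤ t`
(truncated subtraction makes it zero at `t = 0`). -/
noncomputable def doobIncrement {m0 : MeasurableSpace Ω} (P : Measure Ω) (ℱ : Filtration ℕ m0)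
    (Z : Ω → ℝ) (t : ℕ) : Ω → ℝ :=
  fun ω => P[Z | ℱ t] ω - P[Z | ℱ (t - 1)] ω

/-- The weighted conditional quadratic variation `∑_{s=t+1}^T β_s E[(ΔZ_s)² | 𝓕_t]` of the Doob
martingale of `Z`, twice the second-order term of the premium at time `t`. -/
noncomputable def condVariation {m0 : MeasurableSpace Ω} (P : Measure Ω) (ℱ : Filtration ℕ m0)
    (T : ℕ) (β : ℕ → ℝ) (Z : Ω → ℝ) (t : ℕ) : Ω → ℝ :=
  ∑ s ∈ Finset.Icc (t + 1) T, β s • P[fun ω => doobIncrement P ℱ Z s ω ^ 2 | ℱ t]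

/-- `h` is a version of the premium process of the liability `Z` due at time `T`: it solves the
backward recursion with risk aversion `β (t + 1)` in the step from `t + 1` to `t`. -/
structure IsEntropicPremium {m0 : MeasurableSpace Ω} (P : Measure Ω) (ℱ : Filtration ℕ m0)
    (T : ℕ) (β : ℕ → ℝ) (Z : Ω → ℝ) (h : ℕ → Ω → ℝ) : Prop where
  terminal : h T =ᵐ[P] Z
  step : ∀ t < T, h t =ᵐ[P] condEntropic P (ℱ t) (β (t + 1)) (h (t + 1))

section DoobMartingale

open scoped ProbabilityTheory

variable {m0 : MeasurableSpace Ω} {P : Measure Ω} {ℱ : Filtration ℕ m0} {T t : ℕ} {β : ℕ → ℝ}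
  {Z : Ω → ℝ}

lemma condVar_condExp_succ_ae_eq [SigmaFiniteFiltration P ℱ] :
    Var[P[Z | ℱ (t + 1)]; P | ℱ t] =ᵐ[P] P[fun ω => doobIncrement P ℱ Z (t + 1) ω ^ 2 | ℱ t] := by
  refine condExp_congr_ae ?_
  filter_upwards [condExp_condExp_of_le (f := Z) (μ := P) (ℱ.mono t.le_succ) (ℱ.le (t + 1))]
    with ω htower
  simp only [Pi.pow_apply, Pi.sub_apply, htower, doobIncrement, Nat.add_sub_cancel]

lemma integrable_condVariation : Integrable (condVariation P ℱ T β Z t) P :=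
  integrable_finsetSum' _ fun s _ => integrable_condExp.smul (β s)

lemma condVariation_self : condVariation P ℱ T β Z T = 0 := by
  simp [condVariation]

lemma condVariation_ae_eq_add_condExp [SigmaFiniteFiltration P ℱ] (ht : t < T) :
    condVariation P ℱ T β Z t =ᵐ[P]
      β (t + 1) • P[fun ω => doobIncrement P ℱ Z (t + 1) ω ^ 2 | ℱ t] +
        P[condVariation P ℱ T β Z (t + 1) | ℱ t] := by
  let Q (s u : ℕ) : Ω → ℝ := P[fun ω => doobIncrement P ℱ Z s ω ^ 2 | ℱ u]
  have tower : ∀ᵐ ω ∂P, ∀ s, P[β s • Q s (t + 1) | ℱ t] ω = (β s • Q s t) ω :=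
    ae_all_iff.2 fun s => (condExp_smul (β s) (Q s (t + 1)) (ℱ t)).trans
      ((condExp_condExp_of_le (ℱ.mono t.le_succ) (ℱ.le (t + 1))).const_smul (β s))
  have additive : P[∑ s ∈ Finset.Icc (t + 1 + 1) T, β s • Q s (t + 1) | ℱ t] =ᵐ[P]
      ∑ s ∈ Finset.Icc (t + 1 + 1) T, P[β s • Q s (t + 1) | ℱ t] :=
    condExp_finsetSum (fun s _ => integrable_condExp.smul (β s)) (ℱ t)
  filter_upwards [tower, additive] with ω htower hsum
  rw [condVariation, ← Finset.insert_Icc_succ_left_eq_Icc (Nat.succ_le_of_lt ht),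
    Finset.sum_insert (by simp), Pi.add_apply, Pi.add_apply, condVariation, hsum,
    Finset.sum_apply, Finset.sum_apply]
  exact congrArg _ (Finset.sum_congr rfl fun s _ => (htower s).symm)

end DoobMartingale

namespace IsEntropicPremium

open scoped ProbabilityTheory

variable {m0 : MeasurableSpace Ω} {P : Measure Ω} {ℱ : Filtration ℕ m0} {T t : ℕ} {β : ℕ → ℝ}
  {Z : Ω → ℝ} {h : ℕ → Ω → ℝ} {K b : ℝ}

lemma aestronglyMeasurable (hh : IsEntropicPremium P ℱ T β Z h)
    (hZ : AEStronglyMeasurable Z P) (ht : t ≤ T) : AEStronglyMeasurable (h t) P := by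
  rcases ht.eq_or_lt with rfl | ht
  · exact hZ.congr hh.terminal.symm
  · exact (stronglyMeasurable_condEntropic.mono (ℱ.le t)).aestronglyMeasurable.congr
      (hh.step t ht).symm

variable [IsFiniteMeasure P]

lemma ae_abs_le (hh : IsEntropicPremium P ℱ T β Z h) (hZ : AEStronglyMeasurable Z P)
    (hZK : ∀ᵐ ω ∂P, |Z ω| ≤ K) (hβ : ∀ t < T, 0 < β (t + 1)) (ht : t ≤ T) :
    ∀ᵐ ω ∂P, |h t ω| ≤ K := by
  induction ht using Nat.decreasingInduction with
  | self =>
    filter_upwards [hh.terminal, hZK] with ω hterminal hω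
    rwa [hterminal]
  | of_succ t ht ih =>
    filter_upwards [hh.step t ht,
      ae_abs_condEntropic_le (ℱ.le t) (hβ t ht) (hh.aestronglyMeasurable hZ ht) ih] with ω hstep hω
    rwa [hstep]

lemma ae_abs_sub_condExp_le (hh : IsEntropicPremium P ℱ T β Z h)
    (hZ : AEStronglyMeasurable[ℱ T] Z P) (hZK : ∀ᵐ ω ∂P, |Z ω| ≤ K)
    (hβ : ∀ t < T, β (t + 1) ∈ Set.Ioc 0 b) (ht : t ≤ T) :
    ∀ᵐ ω ∂P, |h t ω - P[Z | ℱ t] ω| ≤ 2 * K ^ 2 * b * (T - t) := by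
  have hZ0 := hZ.mono (ℱ.le T)
  induction ht using Nat.decreasingInduction with
  | self =>
    filter_upwards [hh.terminal,
      condExp_of_aestronglyMeasurable' (ℱ.le T) hZ (.of_bound hZ0 K hZK)] with ω hterminal hcond
    simp [hterminal, hcond]
  | of_succ t ht ih =>
    have hmeas := hh.aestronglyMeasurable hZ0 ht
    have hbound := hh.ae_abs_le hZ0 hZK (fun t ht => (hβ t ht).1) ht
    filter_upwards [hh.step t ht,
      ae_abs_condEntropic_sub_condExp_le (ℱ.le t) (hβ t ht).1 hmeas hbound,
      ae_abs_condExp_sub_condExp_le (m := ℱ t) (.of_bound hmeas K hbound) integrable_condExp ih,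
      condExp_condExp_of_le (f := Z) (μ := P) (ℱ.mono t.le_succ) (ℱ.le (t + 1))]
      with ω hstep hentropic hprev htower
    rw [htower] at hprev
    rw [← hstep] at hentropic
    calc |h t ω - P[Z | ℱ t] ω|
        ≤ |h t ω - P[h (t + 1) | ℱ t] ω| + |P[h (t + 1) | ℱ t] ω - P[Z | ℱ t] ω| :=
          abs_sub_le _ _ _
      _ ≤ 2 * K ^ 2 * b + 2 * K ^ 2 * b * (T - (t + 1 : ℕ)) := by
          gcongr
          exact hentropic.trans (by gcongr; exact (hβ t ht).2)
      _ = 2 * K ^ 2 * b * (T - t) := by push_cast; ring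

lemma ae_abs_sub_condExp_succ_sub_le (hh : IsEntropicPremium P ℱ T β Z h)
    (hZ : AEStronglyMeasurable[ℱ T] Z P) (hZK : ∀ᵐ ω ∂P, |Z ω| ≤ K)
    (hβ : ∀ t < T, β (t + 1) ∈ Set.Ioc 0 b) (ht : t < T) :
    ∀ᵐ ω ∂P, |h t ω - P[h (t + 1) | ℱ t] ω -
      β (t + 1) / 2 * P[fun ω' => doobIncrement P ℱ Z (t + 1) ω' ^ 2 | ℱ t] ω| ≤
        4 * K ^ 3 * b ^ 2 * (T + 2) := by
  have hZ0 := hZ.mono (ℱ.le T)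
  have hmeas := hh.aestronglyMeasurable hZ0 ht
  have hbound := hh.ae_abs_le hZ0 hZK (fun t ht => (hβ t ht).1) ht
  obtain ⟨hβt, hβb⟩ := hβ t ht
  have hb : 0 < b := hβt.trans_le hβb
  filter_upwards [hh.step t ht, hZK, condVar_condExp_succ_ae_eq (P := P) (ℱ := ℱ) (Z := Z) (t := t),
    ae_abs_condEntropic_sub_condExp_sub_condVar_le (ℱ.le t) hβt hmeas hbound,
    ae_abs_condVar_sub_condVar_le (ℱ.le t) hmeas integrable_condExp.1 hbound
      (ae_bdd_abs_condExp_of_ae_bdd_abs hZK) (hh.ae_abs_sub_condExp_le hZ hZK hβ ht)]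
    with ω hstep hZω hincr hentropic hvar
  rw [← hstep] at hentropic
  rw [hincr] at hvar
  have hK : 0 ≤ K := (abs_nonneg _).trans hZω
  set V := Var[h (t + 1); P | ℱ t] ω
  set D := P[fun ω' => doobIncrement P ℱ Z (t + 1) ω' ^ 2 | ℱ t] ω
  have hT : (T : ℝ) - (t + 1 : ℕ) ≤ T := by linarith [(t + 1).cast_nonneg (α := ℝ)]
  calc |h t ω - P[h (t + 1) | ℱ t] ω - β (t + 1) / 2 * D|
      = |h t ω - P[h (t + 1) | ℱ t] ω - β (t + 1) / 2 * V + β (t + 1) / 2 * (V - D)| := by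
        ring_nf
    _ ≤ |h t ω - P[h (t + 1) | ℱ t] ω - β (t + 1) / 2 * V| + β (t + 1) / 2 * |V - D| := by
        refine (abs_add_le _ _).trans_eq ?_
        rw [abs_mul, abs_of_pos (half_pos hβt)]
    _ ≤ 8 * K ^ 3 * b ^ 2 + b / 2 * (4 * K * (2 * K ^ 2 * b * T)) := by
        gcongr
        · exact hentropic.trans (by gcongr)
        · exact hvar.trans (by gcongr)
    _ = 4 * K ^ 3 * b ^ 2 * (T + 2) := by ring

theorem ae_abs_sub_condExp_sub_half_condVariation_le (hh : IsEntropicPremium P ℱ T β Z h)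
    (hZ : AEStronglyMeasurable[ℱ T] Z P) (hZK : ∀ᵐ ω ∂P, |Z ω| ≤ K)
    (hβ : ∀ t < T, β (t + 1) ∈ Set.Ioc 0 b) (ht : t ≤ T) :
    ∀ᵐ ω ∂P, |h t ω - P[Z | ℱ t] ω - 1 / 2 * condVariation P ℱ T β Z t ω| ≤
      4 * K ^ 3 * b ^ 2 * (T + 2) * (T - t) := by
  have hZ0 := hZ.mono (ℱ.le T)
  induction ht using Nat.decreasingInduction with
  | self =>
    filter_upwards [hh.terminal,
      condExp_of_aestronglyMeasurable' (ℱ.le T) hZ (.of_bound hZ0 K hZK)] with ω hterminal hcond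
    simp [hterminal, hcond, condVariation_self]
  | of_succ t ht ih =>
    have hint : Integrable (h (t + 1)) P :=
      .of_bound (hh.aestronglyMeasurable hZ0 ht) K
        (hh.ae_abs_le hZ0 hZK (fun t ht => (hβ t ht).1) ht)
    have happrox : Integrable
        (P[Z | ℱ (t + 1)] + (1 / 2 : ℝ) • condVariation P ℱ T β Z (t + 1)) P :=
      integrable_condExp.add (integrable_condVariation.smul _)
    have hprev := ae_abs_condExp_sub_condExp_le (m := ℱ t) hint happrox
      (ih.mono fun ω hω => by simpa [sub_sub] using hω)
    filter_upwards [hprev, hh.ae_abs_sub_condExp_succ_sub_le hZ hZK hβ ht,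
      condVariation_ae_eq_add_condExp ht,
      condExp_add integrable_condExp (integrable_condVariation.smul (1 / 2 : ℝ)) (ℱ t),
      condExp_smul (1 / 2 : ℝ) (condVariation P ℱ T β Z (t + 1)) (ℱ t),
      condExp_condExp_of_le (f := Z) (μ := P) (ℱ.mono t.le_succ) (ℱ.le (t + 1))]
      with ω hprev hstep hpeel hadd hsmul htower
    rw [hadd, Pi.add_apply, hsmul, htower] at hprev
    rw [hpeel]
    simp only [Pi.add_apply, Pi.smul_apply, smul_eq_mul] at hprev ⊢
    rw [abs_le] at *
    constructor <;> linarith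

end IsEntropicPremium

lemma mem_Ioc_of_inv_eq_sum_sum_inv {α : ℕ → ℕ → ℝ} {B b : ℝ} {n t T : ℕ} (hn : 0 < n) (ht : t ≤ T)
    (hα : ∀ i s, 1 ≤ i → s ≤ T → 0 < α i s) (hB : ∀ i s, 1 ≤ i → s ≤ T → α i s ≤ B)
    (hb : b⁻¹ = ∑ s ∈ Finset.Icc t T, ∑ i ∈ Finset.Icc 1 n, (α i s)⁻¹) :
    b ∈ Set.Ioc 0 (B / n) := by
  have hB0 : 0 < B := (hα 1 T le_rfl le_rfl).trans_le (hB 1 T le_rfl le_rfl)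
  have hle : (n : ℝ) / B ≤ b⁻¹ := calc
    (n : ℝ) / B ≤ ∑ i ∈ Finset.Icc 1 n, (α i T)⁻¹ := by
      simpa using card_div_le_sum_inv (s := Finset.Icc 1 n) (a := fun i => α i T)
        (fun i hi => hα i T (Finset.mem_Icc.1 hi).1 le_rfl)
        (fun i hi => hB i T (Finset.mem_Icc.1 hi).1 le_rfl)
    _ ≤ ∑ s ∈ Finset.Icc t T, ∑ i ∈ Finset.Icc 1 n, (α i s)⁻¹ :=
      Finset.single_le_sum (f := fun s => ∑ i ∈ Finset.Icc 1 n, (α i s)⁻¹)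
        (fun s hs => Finset.sum_nonneg fun i hi => (inv_pos.2
          (hα i s (Finset.mem_Icc.1 hi).1 (Finset.mem_Icc.1 hs).2)).le)
        (Finset.right_mem_Icc.2 ht)
    _ = b⁻¹ := hb.symm
  have hnB : 0 < (n : ℝ) / B := by positivity
  have hb0 : 0 < b := inv_pos.1 (hnB.trans_le hle)
  exact ⟨hb0, by simpa using (le_inv_comm₀ hnB hb0).1 hle⟩

theorem exponential_premium_variance_expansion_general
    {m0 : MeasurableSpace Ω} (P : Measure Ω) [IsFiniteMeasure P] (ℱ : Filtration ℕ m0) (T : ℕ)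
    (α : ℕ → ℕ → ℝ) (hα : ∀ i s, 1 ≤ i → s ≤ T → 0 < α i s)
    (hbdd : ∃ B : ℝ, ∀ i s, 1 ≤ i → s ≤ T → α i s ≤ B)
    (β : ℕ → ℕ → ℝ)
    (hβ : ∀ n t, 0 < n → t ≤ T →
      (β n t)⁻¹ = ∑ s ∈ Finset.Icc t T, ∑ i ∈ Finset.Icc 1 n, (α i s)⁻¹)
    (Z : Ω → ℝ) (hZ : AEStronglyMeasurable[ℱ T] Z P) (hZbdd : ∃ K : ℝ, ∀ᵐ ω ∂P, |Z ω| ≤ K)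
    (H : ℕ → ℕ → Ω → ℝ) (hH : ∀ n, 0 < n → IsEntropicPremium P ℱ T (β n) Z (H n)) :
    ∃ C : ℝ, ∀ n : ℕ, 0 < n → ∀ t ≤ T, ∀ᵐ ω ∂P,
      |H n t ω - P[Z | ℱ t] ω - 1 / 2 * condVariation P ℱ T (β n) Z t ω| ≤ C / (n : ℝ) ^ 2 := by
  obtain ⟨B, hB⟩ := hbdd
  obtain ⟨K, hK⟩ := hZbdd
  refine ⟨4 * K ^ 3 * B ^ 2 * (T + 2) * T, fun n hn t ht => ?_⟩
  have hβn (s : ℕ) (hs : s < T) : β n (s + 1) ∈ Set.Ioc 0 (B / n) :=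
    mem_Ioc_of_inv_eq_sum_sum_inv hn hs hα hB (hβ n (s + 1) hn hs)
  filter_upwards [hK, (hH n hn).ae_abs_sub_condExp_sub_half_condVariation_le hZ hK
    hβn ht] with ω hKω hω
  have hK0 : 0 ≤ K := (abs_nonneg _).trans hKω
  calc |H n t ω - P[Z | ℱ t] ω - 1 / 2 * condVariation P ℱ T (β n) Z t ω|
      ≤ 4 * K ^ 3 * (B / n) ^ 2 * (T + 2) * (T - t) := hω
    _ ≤ 4 * K ^ 3 * (B / n) ^ 2 * (T + 2) * T := by gcongr; linarith [t.cast_nonneg (α := ℝ)]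
    _ = 4 * K ^ 3 * B ^ 2 * (T + 2) * T / n ^ 2 := by ring

/-- Theorem 3.6: in the exponential case with bounded risk aversions,
`H_{n,0}(Z) = E[Z] + (1/2) Σ_{t=1}^T β_t^{(n)} E[(ΔZ_t)²] + O(n⁻²)` as `n → ∞`. -/
theorem exponential_premium_variance_expansion
    {m0 : MeasurableSpace Ω} (P : Measure Ω) [IsProbabilityMeasure P]
    (ℱ : Filtration ℕ m0) (T : ℕ) (hT : 0 < T)
    -- `𝓕_0` is `P`-trivial:
    (hF0 : ∀ A : Set Ω, MeasurableSet[ℱ 0] A → P A = 0 ∨ P A = 1)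
    -- exponential risk-aversion parameters, positive and bounded:
    (α : ℕ → ℕ → ℝ) (hα : ∀ i s, 0 < α i s)
    (hbdd : ∃ B : ℝ, ∀ i s, 1 ≤ i → s ≤ T → α i s ≤ B)
    -- modified risk aversion `1/β_t^{(n)} = Σ_{s=t}^T Σ_{i=1}^n 1/α_{i,s}`:
    (β : ℕ → ℕ → ℝ) (hβpos : ∀ n t, 0 < n → t ≤ T → 0 < β n t)
    (hβ : ∀ n t, 0 < n → t ≤ T →
      (β n t)⁻¹ = ∑ s ∈ Finset.Icc t T, ∑ i ∈ Finset.Icc 1 n, (α i s)⁻¹)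
    (Z : Ω → ℝ) (hZ : MeasBdd (ℱ T) Z)
    -- `H n` is the indifference-premium process determined by the backward recursion:
    (H : ℕ → ℕ → Ω → ℝ)
    (hHT : ∀ n, 0 < n → H n T =ᵐ[P] Z)
    (hHrec : ∀ n t, 0 < n → t < T → H n t =ᵐ[P] fun ω =>
      (β n (t + 1))⁻¹ *
        Real.log ((P[fun ω' => Real.exp (β n (t + 1) * H n (t + 1) ω') | ℱ t]) ω)) :
    -- the expansion with uniform `O(n⁻²)` error:
    ∃ C : ℝ, ∀ n : ℕ, 0 < n → ∀ᵐ ω ∂P,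
      |H n 0 ω - (∫ ω', Z ω' ∂P) -
        (1 / 2) * ∑ t ∈ Finset.Icc 1 T, β n t *
          (∫ ω', ((P[Z | ℱ t]) ω' - (P[Z | ℱ (t - 1)]) ω') ^ 2 ∂P)|
        ≤ C / (n : ℝ) ^ 2 := by
  obtain ⟨hZm, K, hZK⟩ := hZ
  obtain ⟨C, hC⟩ := exponential_premium_variance_expansion_general P ℱ T α (fun i s _ _ => hα i s)
    hbdd β hβ Z hZm.aestronglyMeasurable ⟨K, .of_forall hZK⟩ H
    fun n hn => ⟨hHT n hn, fun t ht => hHrec n t hn ht⟩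
  have condExp_eq := condExp_ae_eq_integral_of_measure_eq_zero_or_one (ℱ.le 0) hF0
  have increments_eq := ae_all_iff.2 fun t => condExp_eq fun ω => doobIncrement P ℱ Z t ω ^ 2
  refine ⟨C, fun n hn => ?_⟩
  filter_upwards [hC n hn 0 T.zero_le, condExp_eq Z, increments_eq] with ω hω hmean hincr
  simp only [condVariation, Finset.sum_apply, Pi.smul_apply, smul_eq_mul, hmean, hincr] at hω
  exact hω
end
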